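/- There is no constant C > 0 such that |E(x)| ≤ C·x^{1/2} for all x ≥ 1; consequently the exponent 1/2 in the known upper bound |E(x)| ≪ x^{1/2}·log x cannot be improved. -/

import Mathlib

open Real

/-- `r₂(m)`: the number of representations of `m` as a sum of two squares of integers. -/
noncomputable def r2 (m : ℕ) : ℕ :=
  Set.ncard {p : ℤ × ℤ | p.1 ^ 2 + p.2 ^ 2 = (m : ℤ)}

/-- `S(x)`: the number of integer points `(a,b,w)` with `(a²+b²)² + w² < x`. -/
noncomputable def S (x : ℝ) : ℕ :=
  Set.ncard {p : ℤ × ℤ × ℤ |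
    (((p.1 : ℝ) ^ 2 + (p.2.1 : ℝ) ^ 2) ^ 2 + (p.2.2 : ℝ) ^ 2) < x}

/-- `E(x) = S(x) - (π²/2)·x`. -/
noncomputable def E (x : ℝ) : ℝ := (S x : ℝ) - (Real.pi ^ 2 / 2) * x

/-!
Suppose `|E x| ≤ C √x` for all `x ≥ 1`. Summing over the third coordinate first replaces `S (t ^ 4)`
by the sum `∑ₚ 2 √(t⁴ - |p|⁴)` over lattice points `|p| ≤ t`, up to an error `O(t²)`. Hence the
deviation `F t` of this sum from `π² t⁴ / 2`, divided by `t²`, is bounded as well. An Abel transform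
in the variable `t⁴` turns the square roots into `(v⁴ - |p|⁴)⁺`, and integrating these against a
suitable damped weight leaves `∑ₚ e^{-s|p|}`. By Poisson summation (the theta function and
subordination), `∑ₚ e^{-s|p|} = 2πs ∑ₚ (s² + 4π²|p|²)^{-3/2}`, which is singular at `s = iμ` exactly
when `|μ|` is `2π` times the norm of a lattice point. Comparing singularities as `s = σ + iμ` with
`σ → 0⁺`, the means of `F t * cos (μ t)` against gamma distributions of rate `σ` tend to
`-2√2 π N(μ) / μ²`, where `N(μ)` counts the lattice points with `2π|p| = |μ|`.

Testing `-F` against a Riesz product `∏ (1 + cos (2π|p| t))`, all of whose Fourier coefficients are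
nonnegative, bounds every finite partial sum of `∑ 1 / |p|²` by a multiple of `sup |F|`; but this
series diverges.
-/

open Filter Topology MeasureTheory Set
open scoped NNReal

section CosineCone

/-- The convex cone of nonnegative combinations of cosines. It is a subalgebra because a product of
two cosines is half the sum of two cosines. -/
noncomputable def cosCone : Subalgebra ℝ≥0 (ℝ → ℝ) :=
  (Submodule.span ℝ≥0 (range fun μ t : ℝ => cos (μ * t))).toSubalgebra
    (Submodule.subset_span ⟨0, by ext; simp⟩) fun f g hf hg => by
      refine (Submodule.span_mul_span ℝ≥0 _ _).trans_le ?_ (Submodule.mul_mem_mul hf hg)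
      rw [Submodule.span_le]
      rintro _ ⟨_, ⟨μ, rfl⟩, _, ⟨ν, rfl⟩, rfl⟩
      have product_to_sum : (fun t : ℝ => cos (μ * t)) * (fun t => cos (ν * t)) =
          (1 / 2 : ℝ≥0) • ((fun t => cos ((μ - ν) * t)) + fun t => cos ((μ + ν) * t)) := by
        ext t
        simp [NNReal.smul_def, sub_mul, add_mul, cos_sub, cos_add]
        ring
      change (fun t : ℝ => cos (μ * t)) * (fun t => cos (ν * t)) ∈ Submodule.span ℝ≥0 _
      rw [product_to_sum]
      exact Submodule.smul_mem _ _
        (add_mem (Submodule.subset_span ⟨_, rfl⟩) (Submodule.subset_span ⟨_, rfl⟩))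

theorem cos_mem_cosCone (μ : ℝ) : (fun t : ℝ => cos (μ * t)) ∈ cosCone :=
  Submodule.subset_span ⟨μ, rfl⟩

theorem cosCone_le {P : Submodule ℝ≥0 (ℝ → ℝ)} (h : ∀ μ : ℝ, (fun t : ℝ => cos (μ * t)) ∈ P)
    {f : ℝ → ℝ} (hf : f ∈ cosCone) : f ∈ P :=
  Submodule.span_le.2 (by rintro _ ⟨μ, rfl⟩; exact h μ) hf

end CosineCone

section RieszProduct

variable {α : Type*}

/-- The Riesz product `∏_{i ∈ B} (1 + cos (ν i * t))`. -/
noncomputable def rieszProduct (B : Finset α) (ν : α → ℝ) : ℝ → ℝ :=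
  ∏ i ∈ B, (1 + fun t => cos (ν i * t))

theorem rieszProduct_nonneg (B : Finset α) (ν : α → ℝ) (t : ℝ) : 0 ≤ rieszProduct B ν t := by
  simp only [rieszProduct, Finset.prod_apply, Pi.add_apply, Pi.one_apply]
  exact Finset.prod_nonneg fun i _ => by linarith [neg_one_le_cos (ν i * t)]

theorem rieszProduct_mem_cosCone (B : Finset α) (ν : α → ℝ) : rieszProduct B ν ∈ cosCone :=
  prod_mem fun i _ => add_mem (one_mem _) (cos_mem_cosCone (ν i))

theorem rieszProduct_sub_one_mem_cosCone (B : Finset α) (ν : α → ℝ) :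
    rieszProduct B ν - 1 ∈ cosCone := by
  classical
  induction B using Finset.induction_on with
  | empty => simp [rieszProduct]
  | insert i B hi ih =>
    have split : rieszProduct (insert i B) ν - 1 =
        (rieszProduct B ν - 1) + (fun t => cos (ν i * t)) * rieszProduct B ν := by
      rw [rieszProduct, Finset.prod_insert hi, ← rieszProduct]; ring
    exact split ▸ add_mem ih (mul_mem (cos_mem_cosCone _) (rieszProduct_mem_cosCone B ν))

/-- Since `(cos θ - 1/2) * (1 + cos θ) = cos θ / 2 + cos (2 * θ) / 2`, the factor at `i` alone
accounts for the subtracted term. -/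
theorem cos_mul_rieszProduct_sub_mem_cosCone {B : Finset α} {i : α} (hi : i ∈ B) (ν : α → ℝ) :
    (fun t => (cos (ν i * t) - 1 / 2) * rieszProduct B ν t) ∈ cosCone := by
  classical
  have split : (fun t => (cos (ν i * t) - 1 / 2) * rieszProduct B ν t) =
      ((1 / 2 : ℝ≥0) • ((fun t => cos (ν i * t)) + fun t => cos (2 * ν i * t))) *
        rieszProduct (B.erase i) ν := by
    ext t
    rw [rieszProduct, ← Finset.mul_prod_erase _ _ hi, ← rieszProduct]
    simp [NNReal.smul_def, mul_assoc, cos_two_mul]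
    ring
  exact split ▸ mul_mem (cosCone.smul_mem (add_mem (cos_mem_cosCone _) (cos_mem_cosCone _)) _)
    (rieszProduct_mem_cosCone _ ν)

end RieszProduct

section AsymptoticMeans

variable {ι α : Type*}

/-- The algebra of bounded measurable functions on the line. -/
def boundedMeasurable : Subalgebra ℝ (ℝ → ℝ) where
  carrier := {f | Measurable f ∧ ∃ B, ∀ t, |f t| ≤ B}
  mul_mem' := by
    rintro f g ⟨hf, A, hA⟩ ⟨hg, B, hB⟩
    refine ⟨hf.mul hg, A * B, fun t => ?_⟩
    rw [Pi.mul_apply, abs_mul]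
    exact mul_le_mul (hA t) (hB t) (abs_nonneg _) ((abs_nonneg _).trans (hA t))
  add_mem' := by
    rintro f g ⟨hf, A, hA⟩ ⟨hg, B, hB⟩
    exact ⟨hf.add hg, A + B, fun t => (abs_add_le _ _).trans (add_le_add (hA t) (hB t))⟩
  algebraMap_mem' c := ⟨measurable_const, |c|, fun _ => le_rfl⟩

variable {f g H : ℝ → ℝ}

theorem integrable_of_mem_boundedMeasurable {μ : Measure ℝ} [IsFiniteMeasure μ]
    (hf : f ∈ boundedMeasurable) : Integrable f μ :=
  let ⟨hm, B, hB⟩ := hf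
  .of_bound hm.aestronglyMeasurable B (.of_forall hB)

theorem cos_mem_boundedMeasurable (μ : ℝ) : (fun t => cos (μ * t)) ∈ boundedMeasurable :=
  ⟨by fun_prop, 1, fun _ => abs_cos_le_one _⟩

theorem mem_boundedMeasurable_of_mem_cosCone (hf : f ∈ cosCone) : f ∈ boundedMeasurable :=
  cosCone_le (P := boundedMeasurable.toSubmodule.restrictScalars ℝ≥0) cos_mem_boundedMeasurable hf

variable (m : ι → Measure ℝ) [∀ i, IsProbabilityMeasure (m i)] (l : Filter ι)

/-- The convex cone of bounded measurable functions `f` with `liminf ∫ f ∂(m i) ≥ 0` along `l`. -/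
def meanCone : Submodule ℝ≥0 (ℝ → ℝ) where
  carrier := {f | f ∈ boundedMeasurable ∧ ∀ ε > 0, ∀ᶠ i in l, -ε ≤ ∫ t, f t ∂m i}
  zero_mem' := ⟨zero_mem _, fun ε hε => by simpa using .of_forall fun _ => hε.le⟩
  add_mem' := by
    rintro f g ⟨hf, hf'⟩ ⟨hg, hg'⟩
    refine ⟨add_mem hf hg, fun ε hε => ?_⟩
    filter_upwards [hf' (ε / 2) (half_pos hε), hg' (ε / 2) (half_pos hε)] with i hi hi'
    simp only [Pi.add_apply]
    rw [integral_add (integrable_of_mem_boundedMeasurable hf)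
      (integrable_of_mem_boundedMeasurable hg)]
    linarith
  smul_mem' := by
    rintro c f ⟨hf, hf'⟩
    refine ⟨boundedMeasurable.smul_mem hf (c : ℝ), fun ε hε => ?_⟩
    filter_upwards [hf' (ε / (c + 1)) (by positivity)] with i hi
    simp only [Pi.smul_apply, NNReal.smul_def, smul_eq_mul, integral_const_mul]
    have hc : c * (ε / (c + 1)) ≤ ε := by
      rw [← mul_div_assoc, div_le_iff₀ (by positivity)]
      nlinarith
    nlinarith [mul_le_mul_of_nonneg_left hi c.2]

variable {m l}

theorem mem_meanCone_of_nonneg (hf : f ∈ boundedMeasurable) (h : ∀ t, 0 ≤ f t) : f ∈ meanCone m l :=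
  ⟨hf, fun _ hε => .of_forall fun _ => (neg_nonpos.2 hε.le).trans (integral_nonneg h)⟩

theorem mem_meanCone_of_tendsto {L : ℝ} (hf : f ∈ boundedMeasurable)
    (h : Tendsto (fun i => ∫ t, f t ∂m i) l (𝓝 L)) (hL : 0 ≤ L) : f ∈ meanCone m l :=
  ⟨hf, fun _ hε => h.eventually_const_le (by linarith)⟩

theorem nonneg_of_const_mem_meanCone [l.NeBot] {c : ℝ} (h : (fun _ => c) ∈ meanCone m l) :
    0 ≤ c := by
  refine le_of_forall_pos_le_add fun ε hε => ?_
  obtain ⟨i, hi⟩ := (h.2 ε hε).exists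
  simp only [integral_const, probReal_univ, one_smul] at hi
  linarith

theorem mul_mem_meanCone (hH : ∀ μ : ℝ, (fun t => H t * cos (μ * t)) ∈ meanCone m l)
    (hf : f ∈ cosCone) : H * f ∈ meanCone m l :=
  cosCone_le (P := (meanCone m l).comap (LinearMap.mulLeft ℝ≥0 H)) hH hf

theorem cosCone_le_meanCone
    (hm : ∀ μ ≠ 0, Tendsto (fun i => ∫ t, cos (μ * t) ∂m i) l (𝓝 0)) (hf : f ∈ cosCone) :
    f ∈ meanCone m l := by
  refine cosCone_le (fun μ => ?_) hf
  obtain rfl | hμ := eq_or_ne μ 0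
  · exact mem_meanCone_of_nonneg (cos_mem_boundedMeasurable 0) fun t => by simp
  · exact mem_meanCone_of_tendsto (cos_mem_boundedMeasurable μ) (hm μ hμ) le_rfl

theorem smul_mem_meanCone {c : ℝ} (hc : 0 ≤ c) (hf : f ∈ meanCone m l) : c • f ∈ meanCone m l :=
  (meanCone m l).smul_mem ⟨c, hc⟩ hf

variable {B : Finset α} {ν : α → ℝ} {c : α → ℝ} {C : ℝ}

/-- The mean of `(C + g - ∑ c i cos (ν i t)) Φ(t)` over the Riesz product `Φ` is at most
`(2 * C - ∑ c i / 2)` times the mean of `Φ`, and it is asymptotically nonnegative. -/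
theorem sum_le_of_mul_cos_mem_meanCone [l.NeBot]
    (hm : ∀ μ ≠ 0, Tendsto (fun i => ∫ t, cos (μ * t) ∂m i) l (𝓝 0))
    (hg : Measurable g) (hgC : ∀ t, |g t| ≤ C) (hc : ∀ i ∈ B, 0 ≤ c i)
    (h : ∀ μ : ℝ,
      (fun t => (C + g t - ∑ i ∈ B, c i * cos (ν i * t)) * cos (μ * t)) ∈ meanCone m l) :
    ∑ i ∈ B, c i ≤ 4 * C := by
  by_contra! hlt
  set Φ := rieszProduct B ν
  have majorant_mul : (fun t => C + g t - ∑ i ∈ B, c i * cos (ν i * t)) * Φ ∈ meanCone m l :=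
    mul_mem_meanCone h (rieszProduct_mem_cosCone B ν)
  have cosines : ∑ i ∈ B, c i • (fun t => (cos (ν i * t) - 1 / 2) * Φ t) ∈ meanCone m l :=
    sum_mem fun i hi => smul_mem_meanCone (hc i hi)
      (cosCone_le_meanCone hm (cos_mul_rieszProduct_sub_mem_cosCone hi ν))
  have slack : (fun t => (C - g t) * Φ t) ∈ meanCone m l :=
    mem_meanCone_of_nonneg
      (mul_mem (sub_mem (boundedMeasurable.algebraMap_mem C) ⟨hg, C, hgC⟩)
        (mem_boundedMeasurable_of_mem_cosCone (rieszProduct_mem_cosCone B ν)))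
      fun t => mul_nonneg (sub_nonneg.2 (le_of_abs_le (hgC t))) (rieszProduct_nonneg B ν t)
  have mass : ((∑ i ∈ B, c i) / 2 - 2 * C) • (Φ - 1) ∈ meanCone m l :=
    smul_mem_meanCone (by linarith)
      (cosCone_le_meanCone hm (rieszProduct_sub_one_mem_cosCone B ν))
  have total := add_mem (add_mem majorant_mul cosines) (add_mem slack mass)
  have const : 0 ≤ 2 * C - (∑ i ∈ B, c i) / 2 := by
    refine nonneg_of_const_mem_meanCone (m := m) (l := l) ?_
    convert total using 2 with t
    simp only [Pi.add_apply, Pi.mul_apply, Finset.sum_apply, Pi.smul_apply, smul_eq_mul,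
      Pi.sub_apply, Pi.one_apply, sub_mul, mul_sub, Finset.sum_sub_distrib, ← Finset.sum_mul,
      ← mul_assoc]
    ring
  linarith

theorem tendsto_integral_cos_mul_cos
    (hm : ∀ μ ≠ 0, Tendsto (fun i => ∫ t, cos (μ * t) ∂m i) l (𝓝 0)) {μ₁ : ℝ} (hμ₁ : μ₁ ≠ 0)
    (μ₂ : ℝ) : Tendsto (fun i => ∫ t, cos (μ₁ * t) * cos (μ₂ * t) ∂m i) l
      (𝓝 (if |μ₁| = |μ₂| then 1 / 2 else 0)) := by
  have single (μ : ℝ) :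
      Tendsto (fun i => ∫ t, cos (μ * t) ∂m i) l (𝓝 (if μ = 0 then 1 else 0)) := by
    split_ifs with h
    · simpa [h] using tendsto_const_nhds
    · exact hm μ h
  have product (i : ι) : ∫ t, cos (μ₁ * t) * cos (μ₂ * t) ∂m i =
      ((∫ t, cos ((μ₁ - μ₂) * t) ∂m i) + ∫ t, cos ((μ₁ + μ₂) * t) ∂m i) / 2 := by
    rw [← integral_add (integrable_of_mem_boundedMeasurable (cos_mem_boundedMeasurable _))
      (integrable_of_mem_boundedMeasurable (cos_mem_boundedMeasurable _)), ← integral_div]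
    congr 1 with t
    rw [sub_mul, add_mul, ← two_mul_cos_mul_cos]
    ring
  have value : (if |μ₁| = |μ₂| then 1 / 2 else 0 : ℝ) =
      ((if μ₁ - μ₂ = 0 then 1 else 0) + if μ₁ + μ₂ = 0 then 1 else 0) / 2 := by
    simp only [abs_eq_abs, sub_eq_zero, add_eq_zero_iff_eq_neg]
    have : ¬ (μ₁ = μ₂ ∧ μ₁ = -μ₂) := fun h => hμ₁ (by linarith)
    by_cases h₁ : μ₁ = μ₂ <;> by_cases h₂ : μ₁ = -μ₂ <;> simp_all
  simp_rw [product, value]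
  exact ((single _).add (single _)).div_const 2

theorem tendsto_integral_sub_sum_mul_cos {μ L : ℝ}
    (hm : ∀ μ ≠ 0, Tendsto (fun i => ∫ t, cos (μ * t) ∂m i) l (𝓝 0)) (hν : ∀ i ∈ B, ν i ≠ 0)
    (hg : g ∈ boundedMeasurable) (hL : Tendsto (fun i => ∫ t, g t * cos (μ * t) ∂m i) l (𝓝 L)) :
    Tendsto (fun i => ∫ t, (g t - ∑ i ∈ B, c i * cos (ν i * t)) * cos (μ * t) ∂m i) l
      (𝓝 (L - (∑ i ∈ B with |ν i| = |μ|, c i) / 2)) := by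
  have hcos := cos_mem_boundedMeasurable
  have hint (j : ι) (i : α) : Integrable (fun t => c i * (cos (ν i * t) * cos (μ * t))) (m j) :=
    (integrable_of_mem_boundedMeasurable (mul_mem (hcos _) (hcos _))).const_mul _
  have expand (j : ι) : ∫ t, (g t - ∑ i ∈ B, c i * cos (ν i * t)) * cos (μ * t) ∂m j =
      (∫ t, g t * cos (μ * t) ∂m j) - ∑ i ∈ B, c i * ∫ t, cos (ν i * t) * cos (μ * t) ∂m j := by
    simp_rw [sub_mul, Finset.sum_mul, mul_assoc]
    rw [integral_sub (f := fun t => g t * cos (μ * t))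
      (integrable_of_mem_boundedMeasurable (mul_mem hg (hcos μ)))
      (integrable_finsetSum _ fun i _ => hint j i), integral_finsetSum _ fun i _ => hint j i]
    simp_rw [integral_const_mul]
  have value : (∑ i ∈ B with |ν i| = |μ|, c i) / 2 =
      ∑ i ∈ B, c i * if |ν i| = |μ| then 1 / 2 else 0 := by
    simp_rw [Finset.sum_filter, Finset.sum_div, mul_ite, ite_div, mul_zero, zero_div, mul_one_div]
  simp_rw [expand, value]
  exact hL.sub (tendsto_finsetSum _ fun i hi =>
    (tendsto_integral_cos_mul_cos hm (hν i hi) μ).const_mul _)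

theorem sum_le_of_tendsto_integral_mul_cos [l.NeBot] {L : ℝ → ℝ}
    (hm : ∀ μ ≠ 0, Tendsto (fun i => ∫ t, cos (μ * t) ∂m i) l (𝓝 0))
    (hg : Measurable g) (hgC : ∀ t, |g t| ≤ C) (hc : ∀ i ∈ B, 0 ≤ c i) (hν : ∀ i ∈ B, ν i ≠ 0)
    (hL : ∀ μ ≠ 0, Tendsto (fun i => ∫ t, g t * cos (μ * t) ∂m i) l (𝓝 (L μ)))
    (hcL : ∀ μ ≠ 0, (∑ i ∈ B with |ν i| = |μ|, c i) / 2 ≤ L μ) : ∑ i ∈ B, c i ≤ 4 * C := by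
  have hC : 0 ≤ C := (abs_nonneg _).trans (hgC 0)
  have hg' : g ∈ boundedMeasurable := ⟨hg, C, hgC⟩
  have hmem {f : ℝ → ℝ} (hf : f ∈ boundedMeasurable) (μ : ℝ) :
      (fun t => (f t - ∑ i ∈ B, c i * cos (ν i * t)) * cos (μ * t)) ∈ boundedMeasurable := by
    have hsum : ∑ i ∈ B, c i • (fun t => cos (ν i * t)) ∈ boundedMeasurable :=
      sum_mem fun i _ => boundedMeasurable.smul_mem (cos_mem_boundedMeasurable _) _
    convert mul_mem (sub_mem hf hsum) (cos_mem_boundedMeasurable μ) using 2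
    simp
  refine sum_le_of_mul_cos_mem_meanCone (ν := ν) hm hg hgC hc fun μ => ?_
  obtain rfl | hμ := eq_or_ne μ 0
  · have hsum := mem_meanCone_of_tendsto (hmem (zero_mem _) 0)
      (tendsto_integral_sub_sum_mul_cos (c := c) (L := 0) hm hν (zero_mem _) (by simp))
      (by rw [Finset.filter_false_of_mem fun i hi => by simpa using hν i hi]; simp)
    convert add_mem (mem_meanCone_of_nonneg (add_mem (boundedMeasurable.algebraMap_mem C) hg')
      fun t => neg_le_iff_add_nonneg'.1 (neg_le_of_abs_le (hgC t))) hsum using 2 with t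
    simp [sub_eq_add_neg]
  · have hsum := mem_meanCone_of_tendsto (hmem hg' μ)
      (tendsto_integral_sub_sum_mul_cos hm hν hg' (hL μ hμ)) (sub_nonneg.2 (hcL μ hμ))
    convert add_mem (smul_mem_meanCone hC (cosCone_le_meanCone hm (cos_mem_cosCone μ))) hsum
      using 2 with t
    simp only [Pi.add_apply, Pi.smul_apply, smul_eq_mul]
    ring

end AsymptoticMeans

section GammaMeans

open ProbabilityTheory

variable {a r : ℝ} {s : ℂ}

theorem eqOn_re_pos_of_eq_ofReal {f g : ℂ → ℂ} (hf : DifferentiableOn ℂ f {z | 0 < z.re})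
    (hg : DifferentiableOn ℂ g {z | 0 < z.re}) (h : ∀ x : ℝ, 0 < x → f x = g x) :
    EqOn f g {z | 0 < z.re} := by
  have hopen : IsOpen {z : ℂ | 0 < z.re} := isOpen_lt continuous_const Complex.continuous_re
  refine (hf.analyticOnNhd hopen).eqOn_of_preconnected_of_frequently_eq (hg.analyticOnNhd hopen)
    (convex_halfSpace_re_gt 0).isPreconnected (z₀ := 1) (by simp) ?_
  have to_one : Tendsto (fun x : ℝ => (x : ℂ)) (𝓝[>] 1) (𝓝[≠] 1) := by
    refine tendsto_nhdsWithin_iff.2 ⟨?_, ?_⟩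
    · exact Complex.continuous_ofReal.tendsto' 1 1 (by simp) |>.mono_left nhdsWithin_le_nhds
    · filter_upwards [self_mem_nhdsWithin] with x hx
      simpa using (mem_Ioi.1 hx).ne'
  refine to_one.frequently (Eventually.frequently ?_)
  filter_upwards [self_mem_nhdsWithin] with x hx
  exact h x (one_pos.trans hx)

theorem integrableOn_rpow_mul_exp (ha : 0 < a) (hr : 0 < r) :
    IntegrableOn (fun t : ℝ => t ^ (a - 1) * exp (-(r * t))) (Ioi 0) := by
  simpa using integrableOn_rpow_mul_exp_neg_mul_rpow (p := 1) (s := a - 1) (by linarith) one_pos hr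

theorem norm_rpow_mul_cexp {t : ℝ} (ht : 0 < t) (b : ℝ) (s : ℂ) :
    ‖((t ^ b : ℝ) : ℂ) * Complex.exp (-(s * t))‖ = t ^ b * exp (-(s.re * t)) := by
  simp [Complex.norm_exp, abs_of_pos (rpow_pos_of_pos ht b)]

theorem integrableOn_rpow_mul_cexp (ha : 0 < a) (hs : 0 < s.re) :
    IntegrableOn (fun t : ℝ => ((t ^ (a - 1) : ℝ) : ℂ) * Complex.exp (-(s * t))) (Ioi 0) :=
  (integrableOn_rpow_mul_exp ha hs).mono' (by fun_prop) <|
    (ae_restrict_iff' measurableSet_Ioi).2 <| .of_forall fun _ ht => (norm_rpow_mul_cexp ht _ s).le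

theorem integral_rpow_mul_cexp (ha : 0 < a) (hs : 0 < s.re) :
    ∫ t : ℝ in Ioi 0, ((t ^ (a - 1) : ℝ) : ℂ) * Complex.exp (-(s * t)) =
      s ^ (-a : ℂ) * Gamma a := by
  set ν := (volume.restrict (Ioi (0 : ℝ))).withDensity fun t => ENNReal.ofReal (t ^ (a - 1))
  have hν {z : ℂ} : complexMGF (fun t => -t) ν z =
      ∫ t : ℝ in Ioi 0, ((t ^ (a - 1) : ℝ) : ℂ) * Complex.exp (-(z * t)) := by
    rw [complexMGF, integral_withDensity_eq_integral_toReal_smul (by fun_prop)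
      (.of_forall fun _ => ENNReal.ofReal_lt_top)]
    refine setIntegral_congr_fun measurableSet_Ioi fun t ht => ?_
    simp [ENNReal.toReal_ofReal (rpow_nonneg (mem_Ioi.1 ht).le _)]
  have hset : Ioi 0 ⊆ integrableExpSet (fun t => -t) ν := fun x hx => by
    rw [integrableExpSet, mem_ofPred, integrable_withDensity_iff_integrable_smul' (by fun_prop)
      (.of_forall fun _ => ENNReal.ofReal_lt_top)]
    refine (integrableOn_rpow_mul_exp ha hx).congr_fun (fun t ht => ?_) measurableSet_Ioi
    simp [ENNReal.toReal_ofReal (rpow_nonneg (mem_Ioi.1 ht).le _)]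
  have hdiff : DifferentiableOn ℂ (complexMGF (fun t => -t) ν) {z | 0 < z.re} :=
    differentiableOn_complexMGF.mono fun z hz => interior_maximal hset isOpen_Ioi hz
  rw [← hν]
  refine eqOn_re_pos_of_eq_ofReal hdiff (DifferentiableOn.mul_const (fun z hz => ?_) _)
    (fun x hx => ?_) hs (g := fun z => z ^ (-a : ℂ) * Gamma a)
  · exact (differentiableAt_id.cpow_const (.inl hz)).differentiableWithinAt
  · have := Real.integral_rpow_mul_exp_neg_mul_Ioi ha hx
    rw [hν, ← Complex.ofReal_neg, ← Complex.ofReal_cpow hx.le, rpow_neg hx.le, ← inv_rpow hx.le,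
      ← one_div]
    exact_mod_cast this

theorem integral_gammaMeasure {F : Type*} [NormedAddCommGroup F] [NormedSpace ℝ F]
    (ha : 0 < a) (hr : 0 < r) (f : ℝ → F) :
    ∫ t, f t ∂gammaMeasure a r =
      (r ^ a / Gamma a) • ∫ t in Ioi 0, (t ^ (a - 1) * exp (-(r * t))) • f t := by
  rw [show gammaMeasure a r = volume.withDensity fun t =>
      ENNReal.ofReal (gammaPDFReal a r t) from rfl,
    integral_withDensity_eq_integral_toReal_smul (by fun_prop)
      (.of_forall fun _ => ENNReal.ofReal_lt_top)]
  simp only [ENNReal.toReal_ofReal (gammaPDFReal_nonneg ha hr _)]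
  rw [← integral_smul, ← integral_Ici_eq_integral_Ioi, ← integral_indicator measurableSet_Ici]
  congr 1 with t
  by_cases ht : 0 ≤ t <;> simp [gammaPDFReal, ht, smul_smul, mul_assoc]

theorem integral_mul_cos_gammaMeasure (ha : 0 < a) (hr : 0 < r) {f : ℝ → ℝ}
    (hf : f ∈ boundedMeasurable) (μ : ℝ) :
    ∫ t, f t * cos (μ * t) ∂gammaMeasure a r = r ^ a / Gamma a *
      (∫ t : ℝ in Ioi 0,
        (f t * ((t ^ (a - 1) : ℝ) * Complex.exp (-((r + μ * Complex.I) * t))) : ℂ)).re := by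
  obtain ⟨hm, B, hB⟩ := hf
  have hint : IntegrableOn (fun t : ℝ => f t * (((t ^ (a - 1) : ℝ) : ℂ) *
      Complex.exp (-((r + μ * Complex.I) * t)))) (Ioi 0) :=
    Integrable.bdd_mul (integrableOn_rpow_mul_cexp ha (by simpa)) (by fun_prop)
      (.of_forall fun t => by simpa using hB t)
  rw [integral_gammaMeasure ha hr, smul_eq_mul, ← RCLike.re_eq_complex_re, ← integral_re hint]
  congr 2 with t
  simp [Complex.exp_re]
  ring

theorem tendsto_integral_cos_gammaMeasure (ha : 0 < a) {μ : ℝ} (hμ : μ ≠ 0) :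
    Tendsto (fun r => ∫ t, cos (μ * t) ∂gammaMeasure a r) (𝓝[>] 0) (𝓝 0) := by
  have bound : ∀ᶠ r in 𝓝[>] 0, ‖∫ t, cos (μ * t) ∂gammaMeasure a r‖ ≤ r ^ a * |μ| ^ (-a) := by
    filter_upwards [self_mem_nhdsWithin] with r (hr : 0 < r)
    have h := integral_mul_cos_gammaMeasure ha hr (one_mem _) μ
    simp only [Pi.one_apply, one_mul, Complex.ofReal_one] at h
    rw [h, integral_rpow_mul_cexp ha (by simpa), Complex.re_mul_ofReal, div_mul_eq_mul_div,
      mul_div_assoc, mul_div_cancel_right₀ _ (Gamma_pos_of_pos ha).ne', norm_mul,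
      norm_of_nonneg (rpow_nonneg hr.le a)]
    gcongr
    refine (Complex.abs_re_le_norm _).trans ?_
    rw [← Complex.ofReal_neg, Complex.norm_cpow_real]
    refine rpow_le_rpow_of_nonpos (abs_pos.2 hμ) ?_ (by linarith)
    simpa using Complex.abs_im_le_norm (r + μ * Complex.I)
  refine squeeze_zero_norm' bound ?_
  simpa [zero_rpow ha.ne'] using
    (((continuousAt_rpow_const 0 a (.inr ha.le)).tendsto.mul_const (|μ| ^ (-a))).mono_left
      nhdsWithin_le_nhds)

end GammaMeans

section CauchySchlomilch

variable {F : Type*} [NormedAddCommGroup F] [NormedSpace ℝ F] {a : ℝ} {f : ℝ → F}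

theorem hasDerivAt_sub_div (a : ℝ) {x : ℝ} (hx : x ≠ 0) :
    HasDerivAt (fun x => x - a / x) (1 + a / x ^ 2) x := by
  simpa [div_eq_mul_inv] using (hasDerivAt_id' x).fun_sub ((hasDerivAt_inv hx).const_mul a)

theorem injOn_sub_div (ha : 0 < a) : InjOn (fun x => x - a / x) (Ioi 0) := by
  refine StrictMonoOn.injOn fun x hx y _ hxy => ?_
  have : a / y < a / x := div_lt_div_of_pos_left ha hx hxy
  linarith

theorem image_sub_div (ha : 0 < a) : (fun x => x - a / x) '' Ioi 0 = univ := by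
  refine eq_univ_of_forall fun u => ?_
  have hsq : √(u ^ 2 + 4 * a) ^ 2 = u ^ 2 + 4 * a := sq_sqrt (by positivity)
  have hlt : |u| < √(u ^ 2 + 4 * a) := lt_sqrt_of_sq_lt (by rw [sq_abs]; linarith)
  have hpos : 0 < u + √(u ^ 2 + 4 * a) := by linarith [neg_abs_le u]
  refine ⟨(u + √(u ^ 2 + 4 * a)) / 2, half_pos hpos, ?_⟩
  field_simp
  linear_combination hsq

theorem integral_Ioi_div_comp_div (ha : 0 < a) (f : ℝ → F) :
    ∫ x in Ioi 0, (a / x ^ 2) • f (a / x) = ∫ x in Ioi 0, f x := by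
  have himage : (fun x => a / x) '' Ioi 0 = Ioi 0 := by
    ext y
    refine ⟨?_, fun hy => ⟨a / y, div_pos ha hy, div_div_cancel₀ ha.ne'⟩⟩
    rintro ⟨x, hx, rfl⟩
    exact div_pos ha hx
  have hinj : InjOn (fun x => a / x) (Ioi 0) := fun x _ y _ h => by
    simpa [div_eq_mul_inv, ha.ne'] using h
  have hderiv : ∀ x ∈ Ioi (0 : ℝ),
      HasDerivWithinAt (fun x => a / x) (-(a / x ^ 2)) (Ioi 0) x := fun x hx => by
    simpa [div_eq_mul_inv] using ((hasDerivAt_inv (ne_of_gt hx)).const_mul a).hasDerivWithinAt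
  conv_rhs => rw [← himage, integral_image_eq_integral_abs_deriv_smul measurableSet_Ioi hderiv hinj]
  exact setIntegral_congr_fun measurableSet_Ioi fun x _ => by
    simp only [abs_neg, abs_of_pos (div_pos ha (sq_pos_of_pos ‹x ∈ Ioi 0›))]

theorem integral_eq_two_smul_integral_Ioi (hf : Integrable f) (heven : ∀ u, f (-u) = f u) :
    ∫ x, f x = (2 : ℝ) • ∫ x in Ioi 0, f x := by
  have hneg : ∫ x in Iic 0, f x = ∫ x in Ioi 0, f x := by
    simpa [heven] using (integral_comp_neg_Ioi 0 f).symm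
  rw [← intervalIntegral.integral_Iic_add_Ioi hf.integrableOn hf.integrableOn (b := 0), hneg,
    two_smul]

/-- The substitution `u = x - a / x` maps `Ioi 0` onto `ℝ` with `du = (1 + a / x ^ 2) dx`, and
`x ↦ a / x` changes the sign of `u`, so both summands of the density contribute equally. -/
theorem integral_Ioi_comp_sub_div (ha : 0 ≤ a) (hf : Integrable f) (heven : ∀ u, f (-u) = f u) :
    ∫ x in Ioi 0, f (x - a / x) = ∫ x in Ioi 0, f x := by
  obtain rfl | ha := ha.eq_or_lt
  · simp
  have hderiv : ∀ x ∈ Ioi (0 : ℝ),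
      HasDerivWithinAt (fun x => x - a / x) (1 + a / x ^ 2) (Ioi 0) x :=
    fun x hx => (hasDerivAt_sub_div a (ne_of_gt hx)).hasDerivWithinAt
  have hdens (x : ℝ) : |1 + a / x ^ 2| = 1 + a / x ^ 2 := abs_of_pos (by positivity)
  have hint : IntegrableOn (fun x => (1 + a / x ^ 2) • f (x - a / x)) (Ioi 0) := by
    have := (integrableOn_image_iff_integrableOn_abs_deriv_smul measurableSet_Ioi hderiv
      (injOn_sub_div ha) f).1 (image_sub_div ha ▸ hf.integrableOn)
    simpa only [hdens] using this
  have hint₁ : IntegrableOn (fun x => f (x - a / x)) (Ioi 0) := by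
    refine (hint.bdd_smul 1 (φ := fun x : ℝ => (1 + a / x ^ 2)⁻¹)
      (by fun_prop : Measurable _).aestronglyMeasurable (.of_forall fun x => ?_)).congr
      (.of_forall fun x => inv_smul_smul₀ (by positivity) _)
    rw [norm_inv, Real.norm_eq_abs, hdens]
    exact inv_le_one_of_one_le₀ (le_add_of_nonneg_right (by positivity))
  have hint₂ : IntegrableOn (fun x => (a / x ^ 2) • f (x - a / x)) (Ioi 0) :=
    (hint.sub hint₁).congr (.of_forall fun x => by simp [add_smul])
  have hflip : ∫ x in Ioi 0, (a / x ^ 2) • f (x - a / x) = ∫ x in Ioi 0, f (x - a / x) := by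
    rw [← integral_Ioi_div_comp_div ha fun x => f (x - a / x)]
    refine setIntegral_congr_fun measurableSet_Ioi fun x _ => ?_
    simp only [div_div_cancel₀ ha.ne', ← heven (x - a / x), neg_sub]
  refine smul_right_injective F (two_ne_zero (α := ℝ)) ?_
  calc (2 : ℝ) • ∫ x in Ioi 0, f (x - a / x)
      = ∫ x in Ioi 0, (1 + a / x ^ 2) • f (x - a / x) := by
        simp only [add_smul, one_smul]
        rw [integral_add hint₁ hint₂, hflip, two_smul]
    _ = ∫ x, f x := by
        rw [← setIntegral_univ (f := f), ← image_sub_div ha,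
          integral_image_eq_integral_abs_deriv_smul measurableSet_Ioi hderiv (injOn_sub_div ha)]
        simp only [hdens]
    _ = (2 : ℝ) • ∫ x in Ioi 0, f x := integral_eq_two_smul_integral_Ioi hf heven

theorem integral_Ioi_eq_integral_sq (g : ℝ → F) :
    ∫ x in Ioi 0, g x = ∫ z in Ioi (0 : ℝ), (2 * z) • g (z ^ 2) := by
  rw [← integral_comp_rpow_Ioi_of_pos (g := g) two_pos]
  norm_num

theorem integral_rpow_neg_half_mul_cexp {s : ℂ} (hs : 0 < s.re) {r : ℝ} (hr : 0 ≤ r) :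
    ∫ x : ℝ in Ioi 0, ((x ^ (-1 / 2 : ℝ) : ℝ) : ℂ) * Complex.exp (-(s * (x + r ^ 2 / (4 * x)))) =
      (π / s) ^ (1 / 2 : ℂ) * Complex.exp (-(s * r)) := by
  set f : ℝ → ℂ := fun u => Complex.exp (-s * u ^ 2)
  calc _ = ∫ z in Ioi (0 : ℝ), 2 * Complex.exp (-(s * r)) * f (z - r / 2 / z) := by
        rw [integral_Ioi_eq_integral_sq]
        refine setIntegral_congr_fun measurableSet_Ioi fun z (hz : 0 < z) => ?_
        have hroot : (z ^ 2) ^ (-1 / 2 : ℝ) = z⁻¹ := by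
          rw [← rpow_natCast, ← rpow_mul hz.le]; norm_num [rpow_neg_one]
        have hz' : (z : ℂ) ≠ 0 := by exact_mod_cast hz.ne'
        simp only [f, hroot, mul_assoc, ← Complex.exp_add, Complex.real_smul]
        push_cast
        rw [← mul_assoc, mul_assoc 2, mul_inv_cancel₀ hz', mul_one]
        congr 2
        field_simp
        ring
    _ = 2 * Complex.exp (-(s * r)) * ∫ z in Ioi (0 : ℝ), f z := by
        rw [integral_const_mul,
          integral_Ioi_comp_sub_div (by positivity) (integrable_cexp_neg_mul_sq hs)
          fun u => by simp]
    _ = _ := by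
        rw [integral_gaussian_complex_Ioi hs]; ring

end CauchySchlomilch

section Lattice

/-- The Euclidean norm of a point of the lattice `ℤ × ℤ`, whose own norm is the sup norm. -/
noncomputable def latticeNorm (p : ℤ × ℤ) : ℝ := √((p.1 : ℝ) ^ 2 + (p.2 : ℝ) ^ 2)

theorem latticeNorm_nonneg (p : ℤ × ℤ) : 0 ≤ latticeNorm p := sqrt_nonneg _

theorem latticeNorm_sq (p : ℤ × ℤ) : latticeNorm p ^ 2 = (p.1 : ℝ) ^ 2 + (p.2 : ℝ) ^ 2 :=
  sq_sqrt (by positivity)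

theorem abs_fst_le_latticeNorm (p : ℤ × ℤ) : |(p.1 : ℝ)| ≤ latticeNorm p :=
  abs_le_sqrt (le_add_of_nonneg_right (sq_nonneg _))

theorem abs_snd_le_latticeNorm (p : ℤ × ℤ) : |(p.2 : ℝ)| ≤ latticeNorm p :=
  abs_le_sqrt (le_add_of_nonneg_left (sq_nonneg _))

theorem one_le_latticeNorm {p : ℤ × ℤ} (hp : p ≠ 0) : 1 ≤ latticeNorm p := by
  have : p.1 ≠ 0 ∨ p.2 ≠ 0 := by simpa [Prod.ext_iff, -not_and, not_and_or] using hp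
  rcases this with h | h
  · exact le_trans (by exact_mod_cast Int.one_le_abs h) (abs_fst_le_latticeNorm p)
  · exact le_trans (by exact_mod_cast Int.one_le_abs h) (abs_snd_le_latticeNorm p)

/-- A finite box in the lattice containing the closed disc of radius `t`. -/
noncomputable def latticeBox (t : ℝ) : Finset (ℤ × ℤ) :=
  Finset.Icc (-⌈t⌉) ⌈t⌉ ×ˢ Finset.Icc (-⌈t⌉) ⌈t⌉

theorem mem_latticeBox {t : ℝ} {p : ℤ × ℤ} (h : latticeNorm p ≤ t) : p ∈ latticeBox t := by
  have h₁ := abs_le.1 <| (abs_fst_le_latticeNorm p).trans (h.trans (Int.le_ceil t))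
  have h₂ := abs_le.1 <| (abs_snd_le_latticeNorm p).trans (h.trans (Int.le_ceil t))
  simp only [latticeBox, Finset.mem_product, Finset.mem_Icc]
  exact_mod_cast And.intro h₁ h₂

theorem card_latticeBox_le {t : ℝ} (ht : 1 ≤ t) : ((latticeBox t).card : ℝ) ≤ 25 * t ^ 2 := by
  have hceil : 0 ≤ ⌈t⌉ := Int.ceil_nonneg (by linarith)
  have hcard : ((latticeBox t).card : ℤ) = (2 * ⌈t⌉ + 1) ^ 2 := by
    rw [latticeBox, Finset.card_product, Int.card_Icc]
    push_cast
    rw [Int.toNat_of_nonneg (by lia)]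
    ring
  have hcard' : ((latticeBox t).card : ℝ) = (2 * ⌈t⌉ + 1) ^ 2 := by exact_mod_cast hcard
  rw [hcard', show 25 * t ^ 2 = (5 * t) ^ 2 by ring]
  gcongr
  linarith [Int.ceil_lt_add_one t]

theorem summable_exp_neg_mul_abs_int {c : ℝ} (hc : 0 < c) :
    Summable fun n : ℤ => exp (-(c * |(n : ℝ)|)) := by
  have h : Summable fun n : ℕ => exp (n * -c) := summable_exp_nat_mul_iff.2 (neg_neg_of_pos hc)
  apply Summable.of_nat_of_neg <;> simpa [mul_comm] using h

theorem summable_exp_neg_mul_latticeNorm {c : ℝ} (hc : 0 < c) :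
    Summable fun p => exp (-(c * latticeNorm p)) := by
  have h := summable_exp_neg_mul_abs_int (half_pos hc)
  refine .of_nonneg_of_le (fun _ => (exp_pos _).le) (fun p => ?_)
    (h.mul_of_nonneg h (fun _ => (exp_pos _).le) fun _ => (exp_pos _).le)
  rw [← exp_add, exp_le_exp]
  nlinarith [abs_fst_le_latticeNorm p, abs_snd_le_latticeNorm p]

theorem summable_one_add_int_sq_rpow {b : ℝ} (hb : 1 < 2 * b) :
    Summable fun n : ℤ => (1 + (n : ℝ) ^ 2) ^ (-b) := by
  refine (summable_abs_int_rpow hb).of_norm_bounded_eventually ?_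
  filter_upwards [(finite_singleton (0 : ℤ)).compl_mem_cofinite] with n hn
  have hn : 0 < |(n : ℝ)| := by simpa using hn
  rw [norm_of_nonneg (by positivity), show -(2 * b) = (2 : ℕ) * -b by push_cast; ring,
    rpow_mul hn.le, rpow_natCast, sq_abs]
  exact rpow_le_rpow_of_nonpos (by rw [← sq_abs]; positivity) (by linarith) (by linarith)

theorem summable_one_add_latticeNorm_sq_rpow {b : ℝ} (hb : 1 < b) :
    Summable fun p => (1 + latticeNorm p ^ 2) ^ (-b) := by
  have h := summable_one_add_int_sq_rpow (b := b / 2) (by linarith)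
  refine .of_nonneg_of_le (fun _ => by positivity) (fun p => ?_)
    (h.mul_of_nonneg h (fun _ => by positivity) fun _ => by positivity)
  rw [← mul_rpow (by positivity) (by positivity), show -b = (2 : ℕ) * -(b / 2) by push_cast; ring,
    rpow_mul (by positivity), rpow_natCast, latticeNorm_sq]
  refine rpow_le_rpow_of_nonpos (by positivity) ?_ (by linarith)
  nlinarith [sq_nonneg (p.1 : ℝ), sq_nonneg (p.2 : ℝ),
    mul_nonneg (sq_nonneg (p.1 : ℝ)) (sq_nonneg (p.2 : ℝ))]

theorem summable_norm_cexp_neg_mul_int_sq {b : ℂ} (hb : 0 < b.re) :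
    Summable fun n : ℤ => ‖Complex.exp (-π * b * (n : ℂ) ^ 2)‖ := by
  refine .of_nonneg_of_le (fun _ => norm_nonneg _) (fun n => ?_)
    (summable_exp_neg_mul_abs_int (mul_pos pi_pos hb))
  rw [Complex.norm_exp, exp_le_exp]
  have hn : |(n : ℝ)| ≤ (n : ℝ) ^ 2 := by
    rw [← sq_abs, ← Int.cast_abs]
    exact_mod_cast Int.le_self_sq |n|
  have hre : (-π * b * (n : ℂ) ^ 2).re = -(π * b.re * (n : ℝ) ^ 2) := by
    rw [← Complex.ofReal_intCast, ← Complex.ofReal_pow, Complex.re_mul_ofReal]; simp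
  rw [hre, neg_le_neg_iff]
  gcongr

theorem tsum_cexp_neg_mul_latticeNorm_sq_eq_mul {b : ℂ} (hb : 0 < b.re) :
    ∑' p, Complex.exp (-π * b * (latticeNorm p : ℂ) ^ 2) =
      (∑' n : ℤ, Complex.exp (-π * b * (n : ℂ) ^ 2)) ^ 2 := by
  have h := summable_norm_cexp_neg_mul_int_sq hb
  rw [sq, tsum_mul_tsum_of_summable_norm h h]
  congr 1 with p
  rw [← Complex.exp_add, ← Complex.ofReal_pow, latticeNorm_sq]
  push_cast
  ring_nf

theorem tsum_cexp_neg_mul_latticeNorm_sq {b : ℂ} (hb : 0 < b.re) :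
    ∑' p, Complex.exp (-π * b * (latticeNorm p : ℂ) ^ 2) =
      1 / b * ∑' p, Complex.exp (-π / b * (latticeNorm p : ℂ) ^ 2) := by
  have hb₀ : b ≠ 0 := by rintro rfl; simp at hb
  have hb' : 0 < (1 / b).re := by
    simpa using div_pos hb (Complex.normSq_pos.2 hb₀)
  have h := tsum_cexp_neg_mul_latticeNorm_sq_eq_mul hb'
  simp only [mul_one_div] at h
  rw [tsum_cexp_neg_mul_latticeNorm_sq_eq_mul hb, h, Complex.tsum_exp_neg_mul_int_sq hb,
    mul_pow, div_pow, one_pow]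
  simp [← Complex.cpow_nat_mul]

end Lattice

section Hardy

variable {s : ℂ}

theorem ofReal_mul_cpow {x : ℝ} (hx : 0 < x) {z : ℂ} (hz : z ≠ 0) (w : ℂ) :
    ((x : ℂ) * z) ^ w = (x : ℂ) ^ w * z ^ w := by
  have hx' : (x : ℂ) ≠ 0 := Complex.ofReal_ne_zero.2 hx.ne'
  rw [Complex.cpow_def_of_ne_zero (mul_ne_zero hx' hz), Complex.cpow_def_of_ne_zero hx',
    Complex.cpow_def_of_ne_zero hz, Complex.log_ofReal_mul hx hz, ← Complex.exp_add,
    Complex.ofReal_log hx.le, add_mul]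

/-- The quantity `s + (2π|p|)² / s` attached to the dual lattice point `p` in Hardy's identity
`tsum_cexp_neg_mul_latticeNorm`. -/
noncomputable def hardyDenom (s : ℂ) (p : ℤ × ℤ) : ℂ := s + ((2 * π * latticeNorm p) ^ 2 : ℝ) / s

theorem re_hardyDenom (s : ℂ) (p : ℤ × ℤ) :
    (hardyDenom s p).re = s.re * (1 + (2 * π * latticeNorm p) ^ 2 / ‖s‖ ^ 2) := by
  rw [hardyDenom, Complex.add_re, Complex.div_re, Complex.ofReal_re, Complex.ofReal_im,
    ← Complex.normSq_eq_norm_sq]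
  ring

theorem mul_le_re_hardyDenom (hs : 0 < s.re) (p : ℤ × ℤ) :
    s.re * min 1 ((2 * π) ^ 2 / ‖s‖ ^ 2) * (1 + latticeNorm p ^ 2) ≤ (hardyDenom s p).re := by
  have h₁ := min_le_left 1 ((2 * π) ^ 2 / ‖s‖ ^ 2)
  have h₂ := min_le_right 1 ((2 * π) ^ 2 / ‖s‖ ^ 2)
  rw [re_hardyDenom, mul_assoc, mul_one_add, mul_pow _ (latticeNorm p), mul_div_right_comm]
  gcongr

theorem re_hardyDenom_pos (hs : 0 < s.re) (p : ℤ × ℤ) : 0 < (hardyDenom s p).re := by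
  rw [re_hardyDenom]
  positivity

theorem norm_hardyDenom_cpow_le (hs : 0 < s.re) {b : ℝ} (hb : 0 ≤ b) (p : ℤ × ℤ) :
    ‖hardyDenom s p ^ (-b : ℂ)‖ ≤ (hardyDenom s p).re ^ (-b) := by
  rw [← Complex.ofReal_neg, Complex.norm_cpow_real]
  exact rpow_le_rpow_of_nonpos (re_hardyDenom_pos hs p) (Complex.re_le_norm _) (by linarith)

theorem re_hardyDenom_rpow_le (hs : 0 < s.re) {b : ℝ} (hb : 0 ≤ b) (p : ℤ × ℤ) :
    (hardyDenom s p).re ^ (-b) ≤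
      (s.re * min 1 ((2 * π) ^ 2 / ‖s‖ ^ 2)) ^ (-b) * (1 + latticeNorm p ^ 2) ^ (-b) := by
  have h : 0 < ‖s‖ := norm_pos_iff.2 (Complex.ne_zero_of_re_pos hs)
  rw [← mul_rpow (by positivity) (by positivity)]
  exact rpow_le_rpow_of_nonpos (by positivity) (mul_le_re_hardyDenom hs p) (by linarith)

theorem summable_re_hardyDenom_rpow (hs : 0 < s.re) {b : ℝ} (hb : 1 < b) :
    Summable fun p => (hardyDenom s p).re ^ (-b) :=
  .of_nonneg_of_le (fun p => rpow_nonneg (re_hardyDenom_pos hs p).le _)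
    (re_hardyDenom_rpow_le hs (by linarith)) ((summable_one_add_latticeNorm_sq_rpow hb).mul_left _)

theorem tsum_theta_kernel (hs : 0 < s.re) {x : ℝ} (hx : 0 < x) :
    ∑' p, ((x ^ (-1 / 2 : ℝ) : ℝ) : ℂ) * Complex.exp (-(s * (x + latticeNorm p ^ 2 / (4 * x)))) =
      4 * π / s * ∑' p, ((x ^ (3 / 2 - 1 : ℝ) : ℝ) : ℂ) * Complex.exp (-(hardyDenom s p * x)) := by
  have hs₀ := Complex.ne_zero_of_re_pos hs
  have hx₀ : (x : ℂ) ≠ 0 := Complex.ofReal_ne_zero.2 hx.ne'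
  have hb : 0 < (s / (4 * π * x : ℝ)).re := by
    rw [Complex.div_ofReal_re]; positivity
  have hsqrt : x ^ (3 / 2 - 1 : ℝ) = x * x ^ (-1 / 2 : ℝ) := by
    rw [← rpow_one_add' hx.le (by norm_num)]; norm_num
  have theta := tsum_cexp_neg_mul_latticeNorm_sq hb
  push_cast at theta
  calc _ = ((x ^ (-1 / 2 : ℝ) : ℝ) : ℂ) * Complex.exp (-(s * x)) *
        ∑' p, Complex.exp (-π * (s / (4 * π * x)) * (latticeNorm p : ℂ) ^ 2) := by
        rw [← tsum_mul_left]
        congr 1 with p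
        rw [mul_assoc, ← Complex.exp_add]
        congr 2
        field_simp
        ring
    _ = _ := by
        rw [theta, ← mul_assoc, ← tsum_mul_left, ← tsum_mul_left]
        congr 1 with p
        have hexp : Complex.exp (-(hardyDenom s p * x)) = Complex.exp (-(s * x)) *
            Complex.exp (-π / (s / (4 * π * x)) * (latticeNorm p : ℂ) ^ 2) := by
          rw [← Complex.exp_add, hardyDenom]
          congr 1
          push_cast
          field_simp
          ring
        rw [hexp, hsqrt, Complex.ofReal_mul]
        field_simp

theorem hasSum_integral_rpow_neg_half_mul_cexp (hs : 0 < s.re) :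
    HasSum (fun p => (π / s) ^ (1 / 2 : ℂ) * Complex.exp (-(s * latticeNorm p)))
      (∫ x : ℝ in Ioi 0, ∑' p, ((x ^ (-1 / 2 : ℝ) : ℝ) : ℂ) *
        Complex.exp (-(s * (x + latticeNorm p ^ 2 / (4 * x))))) := by
  simp_rw [← integral_rpow_neg_half_mul_cexp hs (latticeNorm_nonneg _)]
  have hnorm (p : ℤ × ℤ) {x : ℝ} (hx : 0 < x) : ‖((x ^ (-1 / 2 : ℝ) : ℝ) : ℂ) *
      Complex.exp (-(s * (x + latticeNorm p ^ 2 / (4 * x))))‖ =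
        x ^ (-1 / 2 : ℝ) * exp (-(s.re * (x + latticeNorm p ^ 2 / (4 * x)))) := by
    have hcast : (x + latticeNorm p ^ 2 / (4 * x) : ℂ) =
        ((x + latticeNorm p ^ 2 / (4 * x) : ℝ) : ℂ) := by
      push_cast; rfl
    rw [norm_mul, Complex.norm_real, norm_of_nonneg (by positivity), hcast, Complex.norm_exp,
      Complex.neg_re, Complex.re_mul_ofReal]
  refine hasSum_integral_of_summable_integral_norm (fun p => ?_) ?_
  · refine (integrableOn_rpow_mul_exp (a := 1 / 2) (by norm_num) hs).mono' (by fun_prop) ?_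
    refine (ae_restrict_iff' measurableSet_Ioi).2 (.of_forall fun x (hx : 0 < x) => ?_)
    rw [hnorm p hx, show (1 / 2 - 1 : ℝ) = -1 / 2 by norm_num]
    gcongr
    exact le_add_of_nonneg_right (by positivity)
  · have hint (p : ℤ × ℤ) : ∫ x : ℝ in Ioi 0, ‖((x ^ (-1 / 2 : ℝ) : ℝ) : ℂ) *
        Complex.exp (-(s * (x + latticeNorm p ^ 2 / (4 * x))))‖ =
          (π / s.re) ^ (1 / 2 : ℝ) * exp (-(s.re * latticeNorm p)) := by
      rw [setIntegral_congr_fun measurableSet_Ioi fun x hx => hnorm p hx]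
      rw [← Complex.ofReal_inj, ← integral_complex_ofReal]
      convert integral_rpow_neg_half_mul_cexp (s := s.re) (by simpa) (latticeNorm_nonneg p) using 1
      · simp
      · rw [← Complex.ofReal_div, show (1 / 2 : ℂ) = (1 / 2 : ℝ) by simp,
          ← Complex.ofReal_cpow (by positivity)]
        simp
    simp_rw [hint]
    exact (summable_exp_neg_mul_latticeNorm hs).mul_left _

theorem hasSum_integral_rpow_mul_cexp_hardyDenom (hs : 0 < s.re) {a : ℝ} (ha : 1 < a) :
    HasSum (fun p => hardyDenom s p ^ (-a : ℂ) * Gamma a)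
      (∫ x : ℝ in Ioi 0, ∑' p, ((x ^ (a - 1) : ℝ) : ℂ) * Complex.exp (-(hardyDenom s p * x))) := by
  have ha₀ : 0 < a := by linarith
  simp_rw [← integral_rpow_mul_cexp ha₀ (re_hardyDenom_pos hs _)]
  refine hasSum_integral_of_summable_integral_norm
    (fun p => integrableOn_rpow_mul_cexp ha₀ (re_hardyDenom_pos hs p)) ?_
  have hint (p : ℤ × ℤ) : ∫ x : ℝ in Ioi 0, ‖((x ^ (a - 1) : ℝ) : ℂ) *
      Complex.exp (-(hardyDenom s p * x))‖ = (hardyDenom s p).re ^ (-a) * Gamma a := by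
    rw [setIntegral_congr_fun measurableSet_Ioi fun x hx => norm_rpow_mul_cexp hx _ _,
      integral_rpow_mul_exp_neg_mul_Ioi ha₀ (re_hardyDenom_pos hs p), one_div,
      inv_rpow (re_hardyDenom_pos hs p).le, rpow_neg (re_hardyDenom_pos hs p).le]
  simp_rw [hint]
  exact (summable_re_hardyDenom_rpow hs ha).mul_right _

theorem Gamma_three_halves : Gamma (3 / 2) = √π / 2 := by
  rw [show (3 / 2 : ℝ) = 1 / 2 + 1 by norm_num, Gamma_add_one (by norm_num), Gamma_one_half_eq]
  ring

theorem pi_div_cpow_half (hs : 0 < s.re) : (π / s) ^ (1 / 2 : ℂ) = √π * s ^ (-1 / 2 : ℂ) := by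
  rw [div_eq_mul_inv, ofReal_mul_cpow pi_pos (inv_ne_zero (Complex.ne_zero_of_re_pos hs)),
    Complex.inv_cpow _ _ (Complex.slitPlane_arg_ne_pi (.inl hs)), ← Complex.cpow_neg, sqrt_eq_rpow,
    Complex.ofReal_cpow pi_pos.le]
  norm_num [neg_div]

theorem tsum_cexp_neg_mul_latticeNorm (hs : 0 < s.re) :
    ∑' p, Complex.exp (-(s * latticeNorm p)) =
      2 * π * s ^ (-1 / 2 : ℂ) * ∑' p, hardyDenom s p ^ (-(3 / 2 : ℝ) : ℂ) := by
  have hs₀ := Complex.ne_zero_of_re_pos hs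
  have h : (π / s) ^ (1 / 2 : ℂ) * ∑' p, Complex.exp (-(s * latticeNorm p)) =
      4 * π / s * ((∑' p, hardyDenom s p ^ (-(3 / 2 : ℝ) : ℂ)) * Gamma (3 / 2)) := by
    rw [← tsum_mul_left, (hasSum_integral_rpow_neg_half_mul_cexp hs).tsum_eq,
      setIntegral_congr_fun measurableSet_Ioi fun x hx => tsum_theta_kernel hs hx,
      integral_const_mul, ← (hasSum_integral_rpow_mul_cexp_hardyDenom hs (by norm_num)).tsum_eq,
      tsum_mul_right]
  have hpi : (√π : ℂ) * √π = π := by exact_mod_cast mul_self_sqrt pi_pos.le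
  have hpi₀ : (√π : ℂ) ≠ 0 := Complex.ofReal_ne_zero.2 (by positivity)
  have hs' : s ^ (-1 / 2 : ℂ) * s ^ (-1 / 2 : ℂ) = s⁻¹ := by
    rw [← Complex.cpow_add _ _ hs₀, ← Complex.cpow_neg_one]; norm_num
  have hs'' : s ^ (-1 / 2 : ℂ) ≠ 0 := by simp [Complex.cpow_eq_zero_iff, hs₀]
  refine mul_left_cancel₀ (mul_ne_zero hpi₀ hs'') ?_
  rw [← pi_div_cpow_half hs, h, Gamma_three_halves, div_eq_mul_inv _ s, ← hs',
    pi_div_cpow_half hs, ← hpi]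
  push_cast
  ring

end Hardy

section HardyLimit

variable {b μ σ : ℝ}

/-- The lattice points whose frequency `2π|p|` in the sum over the dual lattice is `|μ|`. -/
def shell (μ : ℝ) : Set (ℤ × ℤ) := {p | 2 * π * latticeNorm p = |μ|}

theorem finite_shell (μ : ℝ) : (shell μ).Finite := by
  refine (latticeBox |μ|).finite_toSet.subset fun p (hp : 2 * π * latticeNorm p = |μ|) =>
    mem_latticeBox ?_
  rw [← hp]
  exact le_mul_of_one_le_left (latticeNorm_nonneg p) (by linarith [pi_gt_three])

theorem hardyDenom_of_mem_shell {p : ℤ × ℤ} (hp : p ∈ shell μ) {s : ℂ} (hs : s = σ + μ * Complex.I)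
    (hs₀ : s ≠ 0) : hardyDenom s p = σ * ((σ + 2 * μ * Complex.I) / s) := by
  have hp : 2 * π * latticeNorm p = |μ| := hp
  rw [hardyDenom, hp, sq_abs]
  field_simp
  push_cast
  linear_combination (s + σ + μ * Complex.I) * hs + (μ : ℂ) ^ 2 * Complex.I_sq

theorem tendsto_hardyDenom_of_mem_shell (hμ : μ ≠ 0) {p : ℤ × ℤ} (hp : p ∈ shell μ) :
    Tendsto (fun σ : ℝ => ((σ ^ b : ℝ) : ℂ) * hardyDenom (σ + μ * Complex.I) p ^ (-b : ℂ)) (𝓝[>] 0)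
      (𝓝 (2 ^ (-b : ℂ))) := by
  have hμ' : (μ : ℂ) * Complex.I ≠ 0 := by simpa
  have hquot : Tendsto (fun σ : ℝ =>
      ((σ + 2 * μ * Complex.I) / (σ + μ * Complex.I)) ^ (-b : ℂ)) (𝓝 0)
      (𝓝 (2 ^ (-b : ℂ))) := by
    have : ContinuousAt (fun σ : ℝ => (σ + 2 * μ * Complex.I) / (σ + μ * Complex.I) : ℝ → ℂ) 0 :=
      ContinuousAt.div (by fun_prop) (by fun_prop) (by simpa)
    have hval : ((0 : ℝ) + 2 * μ * Complex.I) / ((0 : ℝ) + μ * Complex.I) = 2 := by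
      rw [Complex.ofReal_zero, zero_add, zero_add, mul_assoc, mul_div_cancel_right₀ _ hμ']
    have h := this.tendsto.cpow (tendsto_const_nhds (x := (-b : ℂ))) (by rw [hval]; simp)
    rwa [hval] at h
  refine (hquot.mono_left nhdsWithin_le_nhds).congr' ?_
  filter_upwards [self_mem_nhdsWithin] with σ (hσ : 0 < σ)
  have hs₀ : (σ + μ * Complex.I : ℂ) ≠ 0 := Complex.ne_zero_of_re_pos (by simpa)
  have hs₁ : (σ + 2 * μ * Complex.I : ℂ) ≠ 0 := Complex.ne_zero_of_re_pos (by simpa)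
  rw [hardyDenom_of_mem_shell hp rfl hs₀, ofReal_mul_cpow hσ (div_ne_zero hs₁ hs₀), ← mul_assoc,
    Complex.ofReal_cpow hσ.le, ← Complex.cpow_add _ _ (by exact_mod_cast hσ.ne'), add_neg_cancel,
    Complex.cpow_zero, one_mul]

theorem tendsto_hardyDenom_of_notMem_shell (hb : 0 < b) (hμ : μ ≠ 0) {p : ℤ × ℤ}
    (hp : p ∉ shell μ) :
    Tendsto (fun σ : ℝ => ((σ ^ b : ℝ) : ℂ) * hardyDenom (σ + μ * Complex.I) p ^ (-b : ℂ)) (𝓝[>] 0)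
      (𝓝 0) := by
  have hne : hardyDenom ((0 : ℝ) + μ * Complex.I) p ≠ 0 := fun h => hp <| by
    have hμ' : (μ : ℂ) ≠ 0 := Complex.ofReal_ne_zero.2 hμ
    rw [hardyDenom, Complex.ofReal_zero, zero_add] at h
    field_simp at h
    rw [Complex.I_sq, mul_neg_one, mul_zero, neg_add_eq_zero] at h
    have h : μ ^ 2 = (2 * π * latticeNorm p) ^ 2 := by rw [mul_pow, mul_pow]; exact_mod_cast h
    have hr : 0 ≤ 2 * π * latticeNorm p := by have := latticeNorm_nonneg p; positivity
    exact (abs_of_nonneg hr).symm.trans ((sq_eq_sq_iff_abs_eq_abs _ _).1 h).symm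
  have hcont : ContinuousAt (fun σ : ℝ => hardyDenom (σ + μ * Complex.I) p) 0 :=
    ContinuousAt.add (by fun_prop) (continuousAt_const.div (by fun_prop) (by simpa))
  have hpow : Tendsto (fun σ : ℝ => σ ^ b) (𝓝 0) (𝓝 0) := by
    simpa [zero_rpow hb.ne'] using (continuousAt_rpow_const 0 b (.inr hb.le)).tendsto
  rw [tendsto_zero_iff_norm_tendsto_zero]
  have h := hpow.abs.mul (hcont.tendsto.norm.rpow_const (p := -b) (.inl (norm_ne_zero_iff.2 hne)))
  rw [abs_zero, zero_mul] at h
  refine (h.mono_left nhdsWithin_le_nhds).congr fun σ => ?_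
  rw [norm_mul, Complex.norm_real, norm_eq_abs, ← Complex.ofReal_neg, Complex.norm_cpow_real]

theorem norm_rpow_mul_hardyDenom_cpow_le (hb : 0 ≤ b) (hσ : 0 < σ) (hσ₁ : σ ≤ 1) (p : ℤ × ℤ) :
    ‖((σ ^ b : ℝ) : ℂ) * hardyDenom (σ + μ * Complex.I) p ^ (-b : ℂ)‖ ≤
      min 1 ((2 * π) ^ 2 / (1 + |μ|) ^ 2) ^ (-b) * (1 + latticeNorm p ^ 2) ^ (-b) := by
  set s : ℂ := σ + μ * Complex.I
  have hs : s.re = σ := by simp [s]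
  have hs₀ : 0 < s.re := by rwa [hs]
  have hs' : 0 < ‖s‖ := norm_pos_iff.2 (Complex.ne_zero_of_re_pos hs₀)
  have hnorm : ‖s‖ ≤ 1 + |μ| := by
    refine (Complex.norm_le_abs_re_add_abs_im s).trans ?_
    simp [s, abs_of_pos hσ, hσ₁]
  calc _ ≤ σ ^ b *
        ((σ * min 1 ((2 * π) ^ 2 / ‖s‖ ^ 2)) ^ (-b) * (1 + latticeNorm p ^ 2) ^ (-b)) := by
        rw [norm_mul, Complex.norm_real, norm_of_nonneg (by positivity), ← hs]
        gcongr
        exact (norm_hardyDenom_cpow_le hs₀ hb p).trans (re_hardyDenom_rpow_le hs₀ hb p)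
    _ = min 1 ((2 * π) ^ 2 / ‖s‖ ^ 2) ^ (-b) * (1 + latticeNorm p ^ 2) ^ (-b) := by
        rw [mul_rpow hσ.le (by positivity), ← mul_assoc, ← mul_assoc, ← rpow_add hσ, add_neg_cancel,
          rpow_zero, one_mul]
    _ ≤ _ := by
        gcongr ?_ * _
        exact rpow_le_rpow_of_nonpos (by positivity) (by gcongr) (by linarith)

theorem tendsto_rpow_mul_tsum_hardyDenom (hb : 1 < b) (hμ : μ ≠ 0) :
    Tendsto (fun σ : ℝ =>
        ((σ ^ b : ℝ) : ℂ) * ∑' p, hardyDenom (σ + μ * Complex.I) p ^ (-b : ℂ)) (𝓝[>] 0)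
      (𝓝 ((shell μ).ncard * 2 ^ (-b : ℂ))) := by
  classical
  have hlim : ∑' p, (if p ∈ shell μ then (2 ^ (-b : ℂ) : ℂ) else 0) =
      (shell μ).ncard * 2 ^ (-b : ℂ) := by
    rw [tsum_eq_sum (s := (finite_shell μ).toFinset) (by simp +contextual),
      Finset.sum_ite_of_true (by simp), Finset.sum_const, nsmul_eq_mul,
      ncard_eq_toFinset_card _ (finite_shell μ)]
  simp_rw [← tsum_mul_left, ← hlim]
  refine tendsto_tsum_of_dominated_convergence
    ((summable_one_add_latticeNorm_sq_rpow hb).mul_left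
      (min 1 ((2 * π) ^ 2 / (1 + |μ|) ^ 2) ^ (-b)))
    (fun p => ?_) ?_
  · split_ifs with hp
    exacts [tendsto_hardyDenom_of_mem_shell hμ hp,
      tendsto_hardyDenom_of_notMem_shell (by linarith) hμ hp]
  · filter_upwards [Ioc_mem_nhdsGT one_pos] with σ hσ p
    exact norm_rpow_mul_hardyDenom_cpow_le (by linarith) hσ.1 hσ.2 p

end HardyLimit

section AbelKernel

open ProbabilityTheory

variable {a v : ℝ}

theorem integral_rpow_mul_rpow_sub {b L : ℝ} (ha : 0 < a) (hb : 0 < b) (hL : 0 < L) :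
    ∫ x in 0..L, x ^ (a - 1) * (L - x) ^ (b - 1) = L ^ (a + b - 1) * beta a b := by
  have hbeta : Complex.betaIntegral a b = (beta a b : ℂ) := by
    rw [beta, Complex.betaIntegral_eq_Gamma_mul_div _ _ (by simpa) (by simpa)]
    push_cast [← Complex.Gamma_ofReal]
    rfl
  rw [← Complex.ofReal_inj, ← intervalIntegral.integral_ofReal, Complex.ofReal_mul, ← hbeta,
    Complex.ofReal_cpow hL.le]
  push_cast
  rw [← Complex.betaIntegral_scaled _ _ hL]
  refine intervalIntegral.integral_congr fun x hx => ?_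
  rw [uIcc_of_le hL.le] at hx
  simp only [Complex.ofReal_cpow hx.1, Complex.ofReal_cpow (sub_nonneg.2 hx.2)]
  push_cast
  rfl

theorem integral_Ioi_sub_rpow_mul_inv_sqrt_sub (ha : 1 / 2 < a) (A B : ℝ) :
    ∫ x in Ioi A, (x - A) ^ (a - 1) * (√(B - x))⁻¹ =
      max (B - A) 0 ^ (a - 1 / 2) * beta a (1 / 2) := by
  have hzero {x : ℝ} (hx : B ≤ x) : (x - A) ^ (a - 1) * (√(B - x))⁻¹ = 0 := by
    simp [sqrt_eq_zero_of_nonpos (sub_nonpos.2 hx)]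
  rcases le_or_gt B A with hBA | hAB
  · rw [setIntegral_eq_zero_of_forall_eq_zero fun x hx => hzero (hBA.trans (mem_Ioi.1 hx).le),
      max_eq_right (by linarith), zero_rpow (by linarith), zero_mul]
  rw [max_eq_left (by linarith), setIntegral_eq_of_subset_of_forall_sdiff_eq_zero measurableSet_Ioi
      Ioc_subset_Ioi_self fun x hx => hzero (not_le.1 fun h => hx.2 ⟨hx.1, h⟩).le,
    ← intervalIntegral.integral_of_le hAB.le]
  have h := integral_rpow_mul_rpow_sub (b := 1 / 2) (by linarith) one_half_pos (sub_pos.2 hAB)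
    (a := a)
  rw [show a + 1 / 2 - 1 = a - 1 / 2 by ring] at h
  rw [← h, ← sub_self A, ← intervalIntegral.integral_comp_sub_right
    (fun x => x ^ (a - 1) * (B - A - x) ^ (1 / 2 - 1 : ℝ))]
  refine intervalIntegral.integral_congr fun x hx => ?_
  rw [uIcc_of_le hAB.le] at hx
  have : 0 ≤ B - x := by linarith [hx.2]
  simp only [sub_sub_sub_cancel_right]
  rw [sqrt_eq_rpow, ← rpow_neg this]
  norm_num

theorem integral_Ioi_zero_eq_integral_pow_four (g : ℝ → ℝ) :
    ∫ x in Ioi 0, g x = ∫ t in Ioi (0 : ℝ), 4 * t ^ 3 * g (t ^ 4) := by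
  rw [← integral_comp_rpow_Ioi_of_pos (g := g) four_pos]
  norm_num [smul_eq_mul]

/-- The kernel `1 / √(v⁴ - t⁴)` of an Abel transform in the variable `t⁴`, which vanishes for
`t ≥ v` because both the square root and the inversion take the value `0` there. -/
noncomputable def abelKernel (v t : ℝ) : ℝ := (√(v ^ 4 - t ^ 4))⁻¹

theorem abelKernel_nonneg (v t : ℝ) : 0 ≤ abelKernel v t := inv_nonneg.2 (sqrt_nonneg _)

theorem abelKernel_eq_zero {t : ℝ} (hv : 0 ≤ v) (h : v ≤ t) : abelKernel v t = 0 := by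
  rw [abelKernel, sqrt_eq_zero_of_nonpos (sub_nonpos.2 (by gcongr)), inv_zero]

theorem measurable_abelKernel : Measurable fun p : ℝ × ℝ => abelKernel p.1 p.2 := by
  unfold abelKernel
  fun_prop

theorem integral_Ioi_sub_rpow_mul_abelKernel (ha : 1 / 2 < a) {r : ℝ} (hr : 0 ≤ r) (v : ℝ) :
    ∫ t in Ioi r, (t ^ 4 - r ^ 4) ^ (a - 1) * (t ^ 3 * abelKernel v t) =
      max (v ^ 4 - r ^ 4) 0 ^ (a - 1 / 2) * (beta a (1 / 2) / 4) := by
  set f : ℝ → ℝ := fun x => (x - r ^ 4) ^ (a - 1) * (√(v ^ 4 - x))⁻¹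
  calc _ = ∫ t in Ioi 0, 4 * t ^ 3 * (Ioi (r ^ 4)).indicator f (t ^ 4) / 4 := by
        rw [← inter_eq_right.2 (Ioi_subset_Ioi hr), ← setIntegral_indicator measurableSet_Ioi]
        refine setIntegral_congr_fun measurableSet_Ioi fun t (ht : 0 < t) => ?_
        have : t ^ 4 ∈ Ioi (r ^ 4) ↔ t ∈ Ioi r := pow_lt_pow_iff_left₀ hr ht.le four_ne_zero
        by_cases h : t ∈ Ioi r <;> simp [indicator, this, h, f, abelKernel]
        ring
    _ = (∫ x in Ioi (r ^ 4), f x) / 4 := by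
        rw [integral_div, ← integral_Ioi_zero_eq_integral_pow_four,
          setIntegral_indicator measurableSet_Ioi,
          inter_eq_right.2 (Ioi_subset_Ioi (by positivity))]
    _ = _ := by
        rw [integral_Ioi_sub_rpow_mul_inv_sqrt_sub ha, mul_div_assoc]

theorem Gamma_five_halves : Gamma (5 / 2) = 3 * √π / 4 := by
  rw [show (5 / 2 : ℝ) = 3 / 2 + 1 by norm_num, Gamma_add_one (by norm_num), Gamma_three_halves]
  ring

theorem integral_pow_three_mul_abelKernel (v : ℝ) :
    ∫ t in Ioi 0, t ^ 3 * abelKernel v t = v ^ 2 / 2 := by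
  have h := integral_Ioi_sub_rpow_mul_abelKernel (a := 1) (by norm_num) le_rfl v
  rw [beta, show (1 + 1 / 2 : ℝ) = 3 / 2 by norm_num, Gamma_one, Gamma_three_halves,
    Gamma_one_half_eq] at h
  have hsqrt : √(v ^ 4) = v ^ 2 := by rw [show v ^ 4 = (v ^ 2) ^ 2 by ring, sqrt_sq (by positivity)]
  norm_num [← sqrt_eq_rpow, max_eq_left (show 0 ≤ v ^ 4 by positivity), hsqrt] at h
  rw [h]
  field_simp
  norm_num

theorem integral_pow_seven_mul_abelKernel (hv : 0 ≤ v) :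
    ∫ t in Ioi 0, t ^ 7 * abelKernel v t = v ^ 6 / 3 := by
  have h := integral_Ioi_sub_rpow_mul_abelKernel (a := 2) (by norm_num) le_rfl v
  have hpow : (v ^ 4) ^ (3 / 2 : ℝ) = v ^ 6 := by
    rw [← rpow_natCast, ← rpow_mul hv, ← rpow_natCast]; norm_num
  rw [beta, show (2 + 1 / 2 : ℝ) = 5 / 2 by norm_num, Gamma_two, Gamma_five_halves,
    Gamma_one_half_eq] at h
  norm_num [← mul_assoc, ← pow_add, max_eq_left (show 0 ≤ v ^ 4 by positivity), hpow] at h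
  rw [h]
  field_simp

theorem integral_sqrt_mul_abelKernel {r : ℝ} (hr : 0 ≤ r) (v : ℝ) :
    ∫ t in Ioi 0, √(t ^ 4 - r ^ 4) * (t ^ 3 * abelKernel v t) = π / 8 * max (v ^ 4 - r ^ 4) 0 := by
  have h := integral_Ioi_sub_rpow_mul_abelKernel (a := 3 / 2) (by norm_num) hr v
  rw [beta, show (3 / 2 + 1 / 2 : ℝ) = 2 by norm_num, Gamma_two, Gamma_three_halves,
    Gamma_one_half_eq] at h
  norm_num [← sqrt_eq_rpow] at h
  rw [setIntegral_eq_of_subset_of_forall_sdiff_eq_zero measurableSet_Ioi (Ioi_subset_Ioi hr)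
    fun t ht => ?_, h]
  · linear_combination max (v ^ 4 - r ^ 4) 0 / 8 * mul_self_sqrt pi_pos.le
  · have ht₀ : 0 < t := ht.1
    have : t ≤ r := not_lt.1 ht.2
    rw [sqrt_eq_zero_of_nonpos (sub_nonpos.2 (by gcongr)), zero_mul]

theorem integrableOn_pow_three_mul_abelKernel (hv : v ≠ 0) :
    IntegrableOn (fun t => t ^ 3 * abelKernel v t) (Ioi 0) :=
  .of_integral_ne_zero (by rw [integral_pow_three_mul_abelKernel v]; positivity)

end AbelKernel

section DampedWeight

variable {s : ℂ} {r v : ℝ}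

/-- The weight `(s v⁻³ + 3 v⁻⁴) e^{-sv}`, chosen so that integrating `(v⁴ - r⁴)⁺` against it gives
the pure exponential `(4 / s) e^{-sr}`. -/
noncomputable def dampedWeight (s : ℂ) (v : ℝ) : ℂ :=
  (s / v ^ 3 + 3 / v ^ 4) * Complex.exp (-(s * v))

theorem measurable_dampedWeight (s : ℂ) : Measurable (dampedWeight s) := by
  unfold dampedWeight
  fun_prop

theorem pow_four_mul_dampedWeight (hv : v ≠ 0) :
    (v : ℂ) ^ 4 * dampedWeight s v =
      s * (v * Complex.exp (-(s * v))) + 3 * Complex.exp (-(s * v)) := by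
  have : (v : ℂ) ≠ 0 := Complex.ofReal_ne_zero.2 hv
  rw [dampedWeight]
  field_simp

theorem norm_dampedWeight_le (hs : 0 < s.re) (hv : 0 < v) :
    ‖dampedWeight s v‖ ≤ ‖s‖ / s.re * ((s.re / v ^ 3 + 3 / v ^ 4) * exp (-(s.re * v))) := by
  have hone : 1 ≤ ‖s‖ / s.re := (one_le_div hs).2 (Complex.re_le_norm s)
  rw [dampedWeight, norm_mul, Complex.norm_exp, Complex.neg_re, Complex.re_mul_ofReal, ← mul_assoc]
  gcongr
  calc ‖s / v ^ 3 + 3 / v ^ 4‖ ≤ ‖s‖ / v ^ 3 + 3 / v ^ 4 := by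
        refine (norm_add_le _ _).trans_eq ?_
        simp [abs_of_pos hv]
    _ ≤ ‖s‖ / s.re * (s.re / v ^ 3) + ‖s‖ / s.re * (3 / v ^ 4) := by
        gcongr
        · exact (by field_simp : ‖s‖ / v ^ 3 = _).le
        · exact le_mul_of_one_le_left (by positivity) hone
    _ = _ := (mul_add _ _ _).symm

theorem integrableOn_pow_mul_cexp (hs : 0 < s.re) (n : ℕ) :
    IntegrableOn (fun v : ℝ => (v : ℂ) ^ n * Complex.exp (-(s * v))) (Ioi 0) := by
  simpa using integrableOn_rpow_mul_cexp (a := n + 1) (by positivity) hs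

theorem integral_pow_mul_cexp (hs : 0 < s.re) (n : ℕ) :
    ∫ v : ℝ in Ioi 0, (v : ℂ) ^ n * Complex.exp (-(s * v)) = n.factorial / s ^ (n + 1) := by
  have h := integral_rpow_mul_cexp (a := n + 1) (by positivity) hs
  simp only [add_sub_cancel_right, rpow_natCast, Gamma_nat_eq_factorial] at h
  have hpow : s ^ (-((n + 1 : ℝ) : ℂ)) = (s ^ (n + 1))⁻¹ := by
    rw [Complex.cpow_neg, ← Complex.cpow_natCast]
    push_cast
    rfl
  rw [hpow] at h
  rw [div_eq_inv_mul]
  exact_mod_cast h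

theorem tendsto_pow_mul_cexp_atTop (hs : 0 < s.re) (n : ℕ) :
    Tendsto (fun v : ℝ => (v : ℂ) ^ n * Complex.exp (-(s * v))) atTop (𝓝 0) := by
  refine squeeze_zero_norm' ?_ (tendsto_rpow_mul_exp_neg_mul_atTop_nhds_zero n s.re hs)
  filter_upwards [eventually_ge_atTop 0] with v hv
  simp [Complex.norm_exp, abs_of_nonneg hv]

theorem integrableOn_pow_four_mul_dampedWeight (hs : 0 < s.re) :
    IntegrableOn (fun v : ℝ => (v : ℂ) ^ 4 * dampedWeight s v) (Ioi 0) := by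
  refine IntegrableOn.congr_fun (((integrableOn_pow_mul_cexp hs 1).const_mul s).add
    ((integrableOn_pow_mul_cexp hs 0).const_mul 3)) (fun v (hv : 0 < v) => ?_) measurableSet_Ioi
  simp [pow_four_mul_dampedWeight hv.ne']

theorem pow_six_mul_dampedWeight (hv : v ≠ 0) :
    (v : ℂ) ^ 6 * dampedWeight s v =
      s * (v ^ 3 * Complex.exp (-(s * v))) + 3 * (v ^ 2 * Complex.exp (-(s * v))) := by
  linear_combination (v : ℂ) ^ 2 * pow_four_mul_dampedWeight (s := s) hv

theorem integrableOn_pow_six_mul_dampedWeight (hs : 0 < s.re) :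
    IntegrableOn (fun v : ℝ => (v : ℂ) ^ 6 * dampedWeight s v) (Ioi 0) :=
  IntegrableOn.congr_fun (((integrableOn_pow_mul_cexp hs 3).const_mul s).add
    ((integrableOn_pow_mul_cexp hs 2).const_mul 3))
    (fun _ hv => (pow_six_mul_dampedWeight (ne_of_gt hv)).symm) measurableSet_Ioi

theorem integral_pow_six_mul_dampedWeight (hs : 0 < s.re) :
    ∫ v : ℝ in Ioi 0, (v : ℂ) ^ 6 * dampedWeight s v = 12 / s ^ 3 := by
  rw [setIntegral_congr_fun measurableSet_Ioi fun v hv => pow_six_mul_dampedWeight (ne_of_gt hv),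
    integral_add ((integrableOn_pow_mul_cexp hs 3).const_mul s)
      ((integrableOn_pow_mul_cexp hs 2).const_mul 3),
    integral_const_mul, integral_const_mul, integral_pow_mul_cexp hs, integral_pow_mul_cexp hs]
  have := Complex.ne_zero_of_re_pos hs
  norm_num [Nat.factorial]
  field_simp
  norm_num

theorem integrableOn_max_mul_dampedWeight (hs : 0 < s.re) (r : ℝ) :
    IntegrableOn (fun v : ℝ => ((max (v ^ 4 - r ^ 4) 0 : ℝ) : ℂ) * dampedWeight s v) (Ioi 0) := by
  refine Integrable.mono (integrableOn_pow_four_mul_dampedWeight hs)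
    (((by fun_prop : Measurable fun v : ℝ => ((max (v ^ 4 - r ^ 4) 0 : ℝ) : ℂ)).mul
      (measurable_dampedWeight s)).aestronglyMeasurable) ?_
  refine .of_forall fun v => ?_
  rw [norm_mul, norm_mul]
  gcongr
  rw [Complex.norm_real, norm_of_nonneg (le_max_right _ _), norm_pow, Complex.norm_real,
    norm_eq_abs, Even.pow_abs (by decide)]
  exact max_le (sub_le_self _ (by positivity)) (by positivity)

theorem hasDerivAt_dampedWeight_primitive (hs : s ≠ 0) (r : ℝ) (hv : v ≠ 0) :
    HasDerivAt (fun v : ℝ => -((v - r ^ 4 / v ^ 3 + 4 / s) * Complex.exp (-(s * v))))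
      (((v ^ 4 - r ^ 4 : ℝ) : ℂ) * dampedWeight s v) v := by
  have hv' : (v : ℂ) ≠ 0 := Complex.ofReal_ne_zero.2 hv
  have hid : HasDerivAt (fun v : ℝ => (v : ℂ)) 1 v := Complex.ofRealCLM.hasDerivAt
  have hexp : HasDerivAt (fun v : ℝ => Complex.exp (-(s * v))) _ v := (hid.const_mul s).neg.cexp
  have hquot : HasDerivAt (fun v : ℝ => (r ^ 4 / v ^ 3 : ℂ)) _ v :=
    (hasDerivAt_const v ((r : ℂ) ^ 4)).div (hid.pow 3) (pow_ne_zero 3 hv')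
  convert! (((hid.sub hquot).add_const (4 / s)).mul hexp).neg using 1
  simp only [dampedWeight, Pi.sub_apply, Pi.neg_apply]
  push_cast
  field_simp
  ring

theorem integral_max_mul_dampedWeight (hs : 0 < s.re) (hr : 0 ≤ r) :
    ∫ v : ℝ in Ioi 0, ((max (v ^ 4 - r ^ 4) 0 : ℝ) : ℂ) * dampedWeight s v =
      4 / s * Complex.exp (-(s * r)) := by
  have hs₀ := Complex.ne_zero_of_re_pos hs
  have hmax {v : ℝ} (hv : v ∈ Ioi r) : max (v ^ 4 - r ^ 4) 0 = v ^ 4 - r ^ 4 :=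
    max_eq_left (sub_nonneg.2 (pow_le_pow_left₀ hr (le_of_lt hv) 4))
  have hint := (integrableOn_max_mul_dampedWeight hs r).mono_set (Ioi_subset_Ioi hr)
  have hlim : Tendsto (fun v : ℝ =>
      -((v - r ^ 4 / v ^ 3 + 4 / s) * Complex.exp (-(s * v)))) atTop (𝓝 0) := by
    have hquot : Tendsto (fun v : ℝ => r ^ 4 / v ^ 3) atTop (𝓝 0) :=
      tendsto_const_nhds.div_atTop (tendsto_pow_atTop three_ne_zero)
    have hexp := tendsto_pow_mul_cexp_atTop hs 0
    convert! ((tendsto_pow_mul_cexp_atTop hs 1).add (hexp.mul ((tendsto_const_nhds (x := 4 / s)).sub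
      ((Complex.continuous_ofReal.tendsto 0).comp hquot)))).neg using 2 with v
    · simp
      ring
    · simp
  have hcont : ContinuousWithinAt (fun v : ℝ =>
      -((v - r ^ 4 / v ^ 3 + 4 / s) * Complex.exp (-(s * v))))
      (Ici r) r := by
    rcases hr.eq_or_lt with rfl | hr
    · simp only [Complex.ofReal_zero, zero_pow four_ne_zero, zero_div, sub_zero]
      fun_prop
    · exact (hasDerivAt_dampedWeight_primitive hs₀ r hr.ne').continuousAt.continuousWithinAt
  rw [setIntegral_eq_of_subset_of_forall_sdiff_eq_zero measurableSet_Ioi (Ioi_subset_Ioi hr)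
      fun v hv => ?_,
    setIntegral_congr_fun measurableSet_Ioi fun v hv => by simp only [hmax hv]; rfl,
    integral_Ioi_of_hasDerivAt_of_tendsto hcont
      (fun v hv => hasDerivAt_dampedWeight_primitive hs₀ r (hr.trans_lt hv).ne')
      (hint.congr_fun (fun v hv => by simp only [hmax hv]) measurableSet_Ioi) hlim]
  · rcases eq_or_ne r 0 with rfl | _
    · simp
    · field_simp
      ring
  · have hv₀ : 0 < v := hv.1
    have : v ≤ r := not_lt.1 hv.2
    rw [max_eq_right (sub_nonpos.2 (by gcongr)), Complex.ofReal_zero, zero_mul]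

theorem integral_norm_max_mul_dampedWeight_le (hs : 0 < s.re) (hr : 0 ≤ r) :
    ∫ v : ℝ in Ioi 0, ‖((max (v ^ 4 - r ^ 4) 0 : ℝ) : ℂ) * dampedWeight s v‖ ≤
      ‖s‖ / s.re * (4 / s.re * exp (-(s.re * r))) := by
  have hs' : 0 < (s.re : ℂ).re := by simpa
  set f : ℝ → ℝ := fun v => max (v ^ 4 - r ^ 4) 0 * ((s.re / v ^ 3 + 3 / v ^ 4) * exp (-(s.re * v)))
  have hf (v : ℝ) : ((max (v ^ 4 - r ^ 4) 0 : ℝ) : ℂ) * dampedWeight s.re v = f v := by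
    simp only [dampedWeight, f]
    push_cast
    rfl
  have hint := integral_max_mul_dampedWeight hs' hr
  have hfint := integrableOn_max_mul_dampedWeight hs' r
  simp only [hf] at hint hfint
  rw [integral_complex_ofReal] at hint
  have hfre : IntegrableOn f (Ioi 0) := hfint.re.congr (.of_forall fun _ => rfl)
  calc _ ≤ ∫ v in Ioi 0, ‖s‖ / s.re * f v := by
        refine setIntegral_mono_on (integrableOn_max_mul_dampedWeight hs r).norm
          (hfre.const_mul _) measurableSet_Ioi fun v hv => ?_
        rw [norm_mul, Complex.norm_real, norm_of_nonneg (le_max_right _ _), mul_left_comm]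
        gcongr
        exact norm_dampedWeight_le hs hv
    _ = _ := by
        rw [integral_const_mul]
        congr 1
        exact_mod_cast hint

end DampedWeight

section DampedKernel

variable {z : ℂ} {x : ℝ}

theorem integrableOn_inv_sqrt_sub_one_mul_cexp (hz : 0 < z.re) :
    IntegrableOn (fun x : ℝ => (((√(x - 1))⁻¹ : ℝ) : ℂ) * Complex.exp (-(z * x))) (Ioi 1) := by
  have h : IntegrableOn _ (Ioi (0 : ℝ)) :=
    (integrableOn_rpow_mul_cexp one_half_pos hz).mul_const (Complex.exp (-z))
  rw [← (measurePreserving_sub_right volume (1 : ℝ)).integrableOn_comp_preimage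
    (measurableEmbedding_subRight 1), preimage_sub_const_Ioi, zero_add] at h
  refine h.congr_fun (fun x (hx : 1 < x) => ?_) measurableSet_Ioi
  have : 0 ≤ x - 1 := by linarith
  simp only [Function.comp_apply]
  rw [mul_assoc, ← Complex.exp_add, sqrt_eq_rpow, ← rpow_neg this]
  push_cast
  ring_nf

theorem integral_inv_sqrt_sub_one_mul_cexp (hz : 0 < z.re) :
    ∫ x : ℝ in Ioi 1, (((√(x - 1))⁻¹ : ℝ) : ℂ) * Complex.exp (-(z * x)) =
      √π * (z ^ (-(1 / 2) : ℂ) * Complex.exp (-z)) := by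
  have h := integral_rpow_mul_cexp one_half_pos hz
  rw [← (measurePreserving_sub_right volume (1 : ℝ)).setIntegral_preimage_emb
    (measurableEmbedding_subRight 1), preimage_sub_const_Ioi, zero_add] at h
  rw [Gamma_one_half_eq] at h
  push_cast at h
  rw [mul_comm, mul_right_comm, ← h, ← integral_mul_const]
  refine setIntegral_congr_fun measurableSet_Ioi fun x (hx : 1 < x) => ?_
  have : 0 ≤ x - 1 := by linarith
  rw [mul_assoc, ← Complex.exp_add, sqrt_eq_rpow, ← rpow_neg this]
  ring_nf

/-- The Abel kernel integrated against a damped weight, as a function of the damping alone: by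
homogeneity the general such integral is a multiple of this one. -/
noncomputable def dampedKernel (z : ℂ) : ℂ :=
  ∫ x : ℝ in Ioi 1, (abelKernel x 1 : ℂ) * dampedWeight z x

theorem abelKernel_one_le (hx : 1 < x) : abelKernel x 1 ≤ (√(x - 1))⁻¹ := by
  refine inv_anti₀ (sqrt_pos.2 (by linarith)) (sqrt_le_sqrt ?_)
  nlinarith [le_self_pow₀ hx.le four_ne_zero]

theorem norm_dampedWeight_le_of_one_le (hx : 1 ≤ x) :
    ‖dampedWeight z x‖ ≤ (‖z‖ + 3) * ‖Complex.exp (-(z * x))‖ := by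
  rw [dampedWeight, norm_mul]
  gcongr
  refine (norm_add_le _ _).trans ?_
  simp only [norm_div, norm_pow, Complex.norm_real, norm_of_nonneg (zero_le_one.trans hx),
    Complex.norm_ofNat]
  gcongr <;> exact div_le_self (by positivity) (one_le_pow₀ hx)

theorem integrableOn_abelKernel_mul_dampedWeight (hz : 0 < z.re) :
    IntegrableOn (fun x : ℝ => (abelKernel x 1 : ℂ) * dampedWeight z x) (Ioi 1) := by
  refine ((integrableOn_inv_sqrt_sub_one_mul_cexp hz).norm.const_mul (‖z‖ + 3)).mono'
    ((Complex.measurable_ofReal.comp (measurable_abelKernel.comp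
      measurable_prodMk_right)).mul (measurable_dampedWeight z)).aestronglyMeasurable ?_
  refine (ae_restrict_iff' measurableSet_Ioi).2 (.of_forall fun x (hx : 1 < x) => ?_)
  rw [norm_mul, norm_mul, Complex.norm_real, Complex.norm_real, mul_left_comm,
    norm_of_nonneg (abelKernel_nonneg _ _), norm_of_nonneg (by positivity)]
  gcongr
  exacts [abelKernel_one_le hx, norm_dampedWeight_le_of_one_le hx.le]

/-- The coefficient of the error term that integration by parts leaves in `dampedKernel`. -/
noncomputable def kernelRemainder (x : ℝ) : ℝ := (√(x - 1))⁻¹ ^ 3 / 4 - 2 * abelKernel x 1 ^ 3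

theorem abelKernel_one_eq (x : ℝ) (hx : 1 ≤ x) :
    abelKernel x 1 = (√(x - 1))⁻¹ * (√((x + 1) * (x ^ 2 + 1)))⁻¹ := by
  rw [abelKernel, ← mul_inv, ← sqrt_mul (sub_nonneg.2 hx)]
  ring_nf

theorem abs_kernelRemainder_le (hx : 1 < x) : |kernelRemainder x| ≤ 3 / 4 * (√(x - 1))⁻¹ := by
  have hu : 0 < x - 1 := by linarith
  set a := (√(x - 1))⁻¹
  set w := 2 * (√((x + 1) * (x ^ 2 + 1)))⁻¹
  have : 0 < a := inv_pos.2 (sqrt_pos.2 hu)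
  have ha2 : a ^ 2 * (x - 1) = 1 := by
    rw [inv_pow, sq_sqrt hu.le, inv_mul_cancel₀ hu.ne']
  have hw0 : 0 ≤ w := by positivity
  have hw2 : w ^ 2 = 4 / ((x + 1) * (x ^ 2 + 1)) := by
    rw [mul_pow, inv_pow, sq_sqrt (by positivity)]
    ring
  have hw1 : w ^ 2 ≤ 1 := by
    rw [hw2, div_le_one (by positivity)]
    nlinarith
  have hw3 : 1 - w ^ 2 ≤ 2 * (x - 1) := by
    rw [hw2, sub_le_comm, le_div_iff₀ (by positivity)]
    nlinarith [pow_pos hu 2, pow_pos hu 3, pow_pos hu 4]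
  have hrem : kernelRemainder x = a ^ 3 * (1 - w ^ 3) / 4 := by
    rw [kernelRemainder, abelKernel_one_eq x hx.le]
    ring
  have hw : w ≤ 1 := by nlinarith
  have hcube : 1 - w ^ 3 ≤ 3 / 2 * (1 - w ^ 2) := by
    nlinarith [mul_nonneg hw0 (sq_nonneg (1 - w)), sq_nonneg (1 - w)]
  rw [hrem, abs_of_nonneg (by have := pow_le_one₀ hw0 hw (n := 3); positivity [sub_nonneg.2 this])]
  calc a ^ 3 * (1 - w ^ 3) / 4 ≤ a ^ 3 * (3 * (x - 1)) / 4 := by gcongr; linarith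
    _ = 3 / 4 * a := by linear_combination 3 / 4 * a * ha2

theorem measurable_kernelRemainder : Measurable kernelRemainder := by
  unfold kernelRemainder abelKernel
  fun_prop

theorem integrableOn_kernelRemainder_mul_cexp (hz : 0 < z.re) :
    IntegrableOn (fun x : ℝ => (kernelRemainder x : ℂ) * Complex.exp (-(z * x))) (Ioi 1) := by
  refine ((integrableOn_inv_sqrt_sub_one_mul_cexp hz).const_mul (3 / 4)).mono
    ((Complex.measurable_ofReal.comp measurable_kernelRemainder).mul
      (by fun_prop)).aestronglyMeasurable ?_
  refine (ae_restrict_iff' measurableSet_Ioi).2 (.of_forall fun x (hx : 1 < x) => ?_)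
  rw [norm_mul, ← mul_assoc, norm_mul _ (Complex.exp _)]
  gcongr
  rw [norm_mul, Complex.norm_real, Complex.norm_real,
    norm_of_nonneg (r := (√(x - 1))⁻¹) (by positivity)]
  simpa using abs_kernelRemainder_le hx

theorem hasDerivAt_inv_sqrt {f : ℝ → ℝ} {f' : ℝ} (hf : HasDerivAt f f' x) (hx : 0 < f x) :
    HasDerivAt (fun y => (√(f y))⁻¹) (-(f' / 2) * (√(f x))⁻¹ ^ 3) x := by
  have := sqrt_pos.2 hx
  convert! (hf.sqrt hx.ne').inv this.ne' using 1
  field_simp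

/-- The boundary term of the integration by parts. -/
noncomputable def kernelPrimitive (x : ℝ) : ℝ := abelKernel x 1 / x ^ 3 - (√(x - 1))⁻¹ / 2

theorem hasDerivAt_kernelPrimitive (hx : 1 < x) :
    HasDerivAt kernelPrimitive (kernelRemainder x - 3 * abelKernel x 1 / x ^ 4) x := by
  have hx0 : x ≠ 0 := by positivity
  have hkernel : HasDerivAt (fun x => abelKernel x 1) _ x :=
    hasDerivAt_inv_sqrt ((hasDerivAt_pow 4 x).sub_const (1 ^ 4))
      (by simpa using one_lt_pow₀ hx four_ne_zero)
  have hsqrt := hasDerivAt_inv_sqrt ((hasDerivAt_id x).sub_const 1) (sub_pos.2 hx)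
  convert! (hkernel.div (hasDerivAt_pow 3 x) (pow_ne_zero 3 hx0)).sub (hsqrt.div_const 2) using 1
  simp only [kernelRemainder, abelKernel, id]
  generalize (√(x ^ 4 - 1 ^ 4))⁻¹ = k
  field_simp
  ring

theorem hasDerivAt_kernelPrimitive_mul_cexp (z : ℂ) (hx : 1 < x) :
    HasDerivAt (fun x : ℝ => (kernelPrimitive x : ℂ) * Complex.exp (-(z * x)))
      (kernelRemainder x * Complex.exp (-(z * x)) - (abelKernel x 1 * dampedWeight z x -
        z / 2 * (((√(x - 1))⁻¹ : ℝ) * Complex.exp (-(z * x))))) x := by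
  have hid : HasDerivAt (fun x : ℝ => (x : ℂ)) 1 x := Complex.ofRealCLM.hasDerivAt
  have hexp : HasDerivAt (fun x : ℝ => Complex.exp (-(z * x))) _ x := (hid.const_mul z).fun_neg.cexp
  convert! (hasDerivAt_kernelPrimitive hx).ofReal_comp.mul hexp using 1
  simp only [kernelPrimitive, dampedWeight]
  push_cast
  ring

theorem kernelPrimitive_one : kernelPrimitive 1 = 0 := by simp [kernelPrimitive, abelKernel]

theorem continuousWithinAt_kernelPrimitive : ContinuousWithinAt kernelPrimitive (Ici 1) 1 := by
  set ψ : ℝ → ℝ := fun x => (√((x + 1) * (x ^ 2 + 1)))⁻¹ / x ^ 3 - 1 / 2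
  have hψ : DifferentiableAt ℝ ψ 1 := by
    have : √((1 + 1) * (1 ^ 2 + 1) : ℝ) ≠ 0 := by norm_num
    fun_prop (disch := norm_num)
  have hψ1 : ψ 1 = 0 := by
    simp only [ψ, show ((1 + 1) * (1 ^ 2 + 1) : ℝ) = 2 ^ 2 by norm_num, sqrt_sq zero_le_two]
    norm_num
  have hslope := hψ.hasDerivAt.tendsto_slope.mono_left (nhdsGT_le_nhdsNE 1)
  have hsqrt : Tendsto (fun x : ℝ => √(x - 1)) (𝓝[>] 1) (𝓝 0) :=
    tendsto_nhdsWithin_of_tendsto_nhds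
      ((by fun_prop : Continuous fun x : ℝ => √(x - 1)).tendsto' 1 0 (by simp))
  rw [← continuousWithinAt_Ioi_iff_Ici, ContinuousWithinAt, kernelPrimitive_one,
    ← zero_mul (deriv ψ 1)]
  refine (hsqrt.mul hslope).congr' ?_
  filter_upwards [self_mem_nhdsWithin] with x (hx : 1 < x)
  have hu : 0 < √(x - 1) := sqrt_pos.2 (sub_pos.2 hx)
  rw [slope_def_field, hψ1, kernelPrimitive, abelKernel_one_eq x hx.le, sub_zero]
  nth_rewrite 2 [← sq_sqrt (sub_pos.2 hx).le]
  simp only [ψ]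
  field_simp

theorem tendsto_kernelPrimitive_mul_cexp_atTop (hz : 0 < z.re) :
    Tendsto (fun x : ℝ => (kernelPrimitive x : ℂ) * Complex.exp (-(z * x))) atTop (𝓝 0) := by
  refine squeeze_zero_norm' ?_ (by simpa using (tendsto_pow_mul_cexp_atTop hz 0).norm)
  filter_upwards [eventually_ge_atTop 2] with x hx
  have h1 : (√(x - 1))⁻¹ ≤ 1 := inv_le_one_of_one_le₀ (one_le_sqrt.2 (by linarith))
  have h2 : abelKernel x 1 / x ^ 3 ≤ (√(x - 1))⁻¹ :=
    (div_le_self (abelKernel_nonneg _ _) (one_le_pow₀ (by linarith))).trans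
      (abelKernel_one_le (by linarith))
  have h3 : 0 ≤ abelKernel x 1 / x ^ 3 := div_nonneg (abelKernel_nonneg _ _) (by positivity)
  rw [norm_mul, Complex.norm_real]
  refine mul_le_of_le_one_left (norm_nonneg _) (abs_le.2 ⟨?_, ?_⟩) <;> rw [kernelPrimitive] <;>
    linarith [inv_nonneg.2 (sqrt_nonneg (x - 1))]

theorem dampedKernel_eq (hz : 0 < z.re) :
    dampedKernel z = √π / 2 * (z ^ (1 / 2 : ℂ) * Complex.exp (-z)) +
      ∫ x : ℝ in Ioi 1, (kernelRemainder x : ℂ) * Complex.exp (-(z * x)) := by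
  have hK := integrableOn_abelKernel_mul_dampedWeight hz
  have hR := integrableOn_kernelRemainder_mul_cexp hz
  have hM := (integrableOn_inv_sqrt_sub_one_mul_cexp hz).const_mul (z / 2)
  have hcont : ContinuousWithinAt
      (fun x : ℝ => (kernelPrimitive x : ℂ) * Complex.exp (-(z * x))) (Ici 1) 1 :=
    (Complex.continuous_ofReal.continuousAt.comp_continuousWithinAt
      continuousWithinAt_kernelPrimitive).mul (by fun_prop)
  have hKM : IntegrableOn (fun x : ℝ => abelKernel x 1 * dampedWeight z x -
    z / 2 * (((√(x - 1))⁻¹ : ℝ) * Complex.exp (-(z * x)))) (Ioi 1) := hK.sub hM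
  have h := integral_Ioi_of_hasDerivAt_of_tendsto hcont
    (fun x hx => hasDerivAt_kernelPrimitive_mul_cexp z hx) (hR.sub hKM)
    (tendsto_kernelPrimitive_mul_cexp_atTop hz)
  rw [integral_sub hR hKM, integral_sub hK hM, integral_const_mul,
    integral_inv_sqrt_sub_one_mul_cexp hz, kernelPrimitive_one, Complex.ofReal_zero, zero_mul] at h
  have hpow : z * z ^ (-(1 / 2) : ℂ) = z ^ (1 / 2 : ℂ) := by
    nth_rewrite 1 [← Complex.cpow_one z]
    rw [← Complex.cpow_add _ _ (Complex.ne_zero_of_re_pos hz)]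
    norm_num
  rw [dampedKernel]
  linear_combination -h + √π / 2 * Complex.exp (-z) * hpow

theorem norm_dampedKernel_sub_le (hz : 0 < z.re) :
    ‖dampedKernel z - √π / 2 * (z ^ (1 / 2 : ℂ) * Complex.exp (-z))‖ ≤
      3 / 4 * (√π * (z.re ^ (-(1 / 2) : ℝ) * exp (-z.re))) := by
  have hz' : 0 < (z.re : ℂ).re := hz
  have hint := integral_inv_sqrt_sub_one_mul_cexp hz'
  have hcast : (√π * ((z.re : ℂ) ^ (-(1 / 2) : ℂ) * Complex.exp (-z.re)) : ℂ) =
      ((√π * (z.re ^ (-(1 / 2) : ℝ) * exp (-z.re)) : ℝ) : ℂ) := by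
    rw [Complex.ofReal_mul, Complex.ofReal_mul, Complex.ofReal_cpow hz.le]
    push_cast
    rfl
  rw [hcast] at hint
  rw [dampedKernel_eq hz, add_sub_cancel_left]
  calc _ ≤ ∫ x : ℝ in Ioi 1, 3 / 4 * ((√(x - 1))⁻¹ * exp (-(z.re * x))) := by
        have hbound : IntegrableOn
            (fun x : ℝ => 3 / 4 * ((√(x - 1))⁻¹ * exp (-(z.re * x)))) (Ioi 1) := by
          simpa [IntegrableOn, Complex.norm_exp, abs_of_nonneg] using
            (integrableOn_inv_sqrt_sub_one_mul_cexp hz).norm.const_mul (3 / 4)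
        refine norm_integral_le_of_norm_le hbound
          ((ae_restrict_iff' measurableSet_Ioi).2 (.of_forall fun x (hx : 1 < x) => ?_))
        rw [norm_mul, Complex.norm_real, Complex.norm_exp, Complex.neg_re, Complex.re_mul_ofReal,
          ← mul_assoc]
        gcongr
        exact abs_kernelRemainder_le hx
    _ = _ := by
        rw [integral_const_mul]
        congr 1
        rw [← Complex.ofReal_inj, ← hint, ← integral_complex_ofReal]
        push_cast
        rfl

end DampedKernel

section AbelTransform

variable {F : ℝ → ℝ} {C t v : ℝ} {s : ℂ}

/-- The Abel transform in the variable `t⁴` that turns `√(t⁴ - r⁴) / t²` into a multiple of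
`(v⁴ - r⁴)⁺`. -/
noncomputable def abelTransform (F : ℝ → ℝ) (v : ℝ) : ℝ :=
  ∫ t in Ioi 0, F t * (t ^ 5 * abelKernel v t)

theorem pow_five_mul_integral_abelKernel_mul_dampedWeight (s : ℂ) (ht : 0 < t) :
    (t : ℂ) ^ 5 * ∫ v : ℝ in Ioi 0, (abelKernel v t : ℂ) * dampedWeight s v =
      dampedKernel (s * t) := by
  have ht' : (t : ℂ) ≠ 0 := Complex.ofReal_ne_zero.2 ht.ne'
  have hscale (x : ℝ) : abelKernel (t * x) t = (t ^ 2)⁻¹ * abelKernel x 1 := by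
    rw [abelKernel, abelKernel, show (t * x) ^ 4 - t ^ 4 = (t ^ 2) ^ 2 * (x ^ 4 - 1 ^ 4) by ring,
      sqrt_mul (by positivity), sqrt_sq (by positivity), mul_inv]
  have hweight (x : ℝ) : (t : ℂ) ^ 4 * dampedWeight s (t * x : ℝ) = dampedWeight (s * t) x := by
    rw [dampedWeight, dampedWeight, ← mul_assoc]
    push_cast
    congr 1
    · field_simp
    · ring_nf
  have hsub := integral_comp_mul_left_Ioi
    (fun v : ℝ => (abelKernel v t : ℂ) * dampedWeight s v) 0 ht
  rw [mul_zero, Complex.real_smul, Complex.ofReal_inv, eq_inv_mul_iff_mul_eq₀ ht'] at hsub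
  rw [← hsub, dampedKernel, ← mul_assoc, ← integral_const_mul,
    setIntegral_eq_of_subset_of_forall_sdiff_eq_zero measurableSet_Ioi
      (Ioi_subset_Ioi zero_le_one) fun x hx => ?_]
  · refine setIntegral_congr_fun measurableSet_Ioi fun x _ => ?_
    rw [hscale, ← hweight]
    push_cast
    field_simp
  · have hx0 : 0 ≤ x := le_of_lt hx.1
    rw [hscale, abelKernel_eq_zero hx0 (not_lt.1 hx.2)]
    simp

theorem norm_pow_five_mul_abelKernel_mul_le (hFC : ∀ t, |F t| ≤ C) (ht : 0 < t) (hv : 0 < v)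
    (w : ℂ) :
    ‖(F t * (t ^ 5 * abelKernel v t) : ℂ) * w‖ ≤ C * (v ^ 2 * (t ^ 3 * abelKernel v t)) * ‖w‖ := by
  have hC : 0 ≤ C := (abs_nonneg _).trans (hFC t)
  have hk := abelKernel_nonneg v t
  have hF := hFC t
  rw [norm_mul]
  norm_cast
  rw [norm_mul, norm_eq_abs, norm_of_nonneg (by positivity)]
  gcongr ?_ * ?_ * ‖w‖
  rcases le_or_gt v t with h | h
  · simp [abelKernel_eq_zero hv.le h]
  · calc t ^ 5 * abelKernel v t = t ^ 2 * (t ^ 3 * abelKernel v t) := by ring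
      _ ≤ _ := by gcongr

theorem integrable_prod_abelKernel_mul_dampedWeight (hF : Measurable F) (hFC : ∀ t, |F t| ≤ C)
    (hs : 0 < s.re) :
    Integrable (fun q : ℝ × ℝ => (F q.2 * (q.2 ^ 5 * abelKernel q.1 q.2) : ℂ) * dampedWeight s q.1)
      ((volume.restrict (Ioi 0)).prod (volume.restrict (Ioi 0))) := by
  have hk := measurable_abelKernel
  have hw := measurable_dampedWeight s
  have hC : 0 ≤ C := (abs_nonneg _).trans (hFC 0)
  set g : ℝ × ℝ → ℝ := fun q =>
    C * (q.1 ^ 2 * (q.2 ^ 3 * abelKernel q.1 q.2)) * ‖dampedWeight s q.1‖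
  have hg (v : ℝ) : ∫ t in Ioi 0, g (v, t) = C / 2 * ‖(v : ℂ) ^ 4 * dampedWeight s v‖ := by
    simp only [g]
    rw [integral_mul_const, integral_const_mul, integral_const_mul,
      integral_pow_three_mul_abelKernel, norm_mul, norm_pow, Complex.norm_real, norm_eq_abs,
      Even.pow_abs (by decide)]
    ring
  have hgint : Integrable g ((volume.restrict (Ioi 0)).prod (volume.restrict (Ioi 0))) := by
    refine (integrable_prod_iff (by fun_prop)).2 ⟨?_, ?_⟩
    · refine (ae_restrict_iff' measurableSet_Ioi).2 (.of_forall fun v (hv : 0 < v) => ?_)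
      simp only [g]
      exact (((integrableOn_pow_three_mul_abelKernel hv.ne').const_mul _).const_mul _).mul_const _
    · refine ((integrableOn_pow_four_mul_dampedWeight hs).norm.const_mul (C / 2)).congr
        (.of_forall fun v => ?_)
      simp only [← hg]
      refine setIntegral_congr_fun measurableSet_Ioi fun t (ht : 0 < t) => ?_
      have := abelKernel_nonneg v t
      exact (norm_of_nonneg (by positivity)).symm
  refine hgint.mono' (by fun_prop) ?_
  rw [Measure.prod_restrict]
  refine (ae_restrict_iff' (measurableSet_Ioi.prod measurableSet_Ioi)).2 (.of_forall ?_)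
  rintro ⟨v, t⟩ ⟨hv, ht⟩
  exact norm_pow_five_mul_abelKernel_mul_le hFC ht hv _

theorem integral_mul_abelKernel_mul_dampedWeight (s : ℂ) (ht : 0 < t) :
    ∫ v : ℝ in Ioi 0, (F t * (t ^ 5 * abelKernel v t) : ℂ) * dampedWeight s v =
      F t * dampedKernel (s * t) := by
  rw [← pow_five_mul_integral_abelKernel_mul_dampedWeight s ht, ← integral_const_mul,
    ← integral_const_mul]
  congr with v
  ring

theorem abelTransform_mul_eq_integral (F : ℝ → ℝ) (v : ℝ) (w : ℂ) :
    (abelTransform F v : ℂ) * w = ∫ t : ℝ in Ioi 0, (F t * (t ^ 5 * abelKernel v t) : ℂ) * w := by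
  rw [integral_mul_const, abelTransform, ← integral_complex_ofReal]
  push_cast
  rfl

theorem integrableOn_abelTransform_mul_dampedWeight (hF : Measurable F) (hFC : ∀ t, |F t| ≤ C)
    (hs : 0 < s.re) :
    IntegrableOn (fun v : ℝ => (abelTransform F v : ℂ) * dampedWeight s v) (Ioi 0) := by
  simp only [abelTransform_mul_eq_integral]
  exact (integrable_prod_abelKernel_mul_dampedWeight hF hFC hs).integral_prod_left

theorem integrableOn_mul_dampedKernel (hF : Measurable F) (hFC : ∀ t, |F t| ≤ C) (hs : 0 < s.re) :
    IntegrableOn (fun t : ℝ => F t * dampedKernel (s * t)) (Ioi 0) :=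
  IntegrableOn.congr_fun
    (integrable_prod_abelKernel_mul_dampedWeight hF hFC hs).integral_prod_right
    (fun _ ht => integral_mul_abelKernel_mul_dampedWeight s ht) measurableSet_Ioi

theorem integral_mul_dampedKernel (hF : Measurable F) (hFC : ∀ t, |F t| ≤ C) (hs : 0 < s.re) :
    ∫ t : ℝ in Ioi 0, F t * dampedKernel (s * t) =
      ∫ v : ℝ in Ioi 0, (abelTransform F v : ℂ) * dampedWeight s v := by
  rw [← setIntegral_congr_fun measurableSet_Ioi
      fun t ht => integral_mul_abelKernel_mul_dampedWeight (F := F) s ht,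
    ← integral_integral_swap (integrable_prod_abelKernel_mul_dampedWeight hF hFC hs)]
  simp only [abelTransform_mul_eq_integral]

theorem integral_rpow_neg_half_mul_exp_scaled {σ : ℝ} (hσ : 0 < σ) :
    ∫ t in Ioi 0, (σ * t) ^ (-(1 / 2) : ℝ) * exp (-(σ * t)) = √π / σ := by
  have h := integral_comp_mul_left_Ioi (fun t : ℝ => t ^ (-(1 / 2) : ℝ) * exp (-t)) 0 hσ
  have hΓ := Real.integral_rpow_mul_exp_neg_mul_Ioi one_half_pos one_pos
  norm_num [Gamma_one_half_eq] at hΓ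
  rw [h, mul_zero, smul_eq_mul, inv_mul_eq_div]
  norm_num [hΓ]

theorem norm_integral_mul_dampedKernel_sub_le (hF : Measurable F) (hFC : ∀ t, |F t| ≤ C)
    (hs : 0 < s.re) :
    ‖(∫ t : ℝ in Ioi 0, F t * dampedKernel (s * t)) - √π / 2 * s ^ (1 / 2 : ℂ) *
      ∫ t : ℝ in Ioi 0, F t * ((t ^ (3 / 2 - 1 : ℝ) : ℝ) * Complex.exp (-(s * t)))‖ ≤
      3 / 4 * π * C / s.re := by
  have hmain : IntegrableOn (fun t : ℝ => F t * (((t ^ (3 / 2 - 1 : ℝ) : ℝ) : ℂ) *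
      Complex.exp (-(s * t)))) (Ioi 0) :=
    Integrable.bdd_mul (integrableOn_rpow_mul_cexp (by norm_num) hs) (by fun_prop)
      (.of_forall fun t => by simpa using hFC t)
  have hrpow : IntegrableOn (fun t => (s.re * t) ^ (-(1 / 2) : ℝ) * exp (-(s.re * t))) (Ioi 0) :=
    .of_integral_ne_zero (by rw [integral_rpow_neg_half_mul_exp_scaled hs]; positivity)
  rw [← integral_const_mul,
    ← integral_sub (integrableOn_mul_dampedKernel hF hFC hs) (hmain.const_mul _)]
  calc _ ≤ ∫ t in Ioi 0, C * (3 / 4 * √π) * ((s.re * t) ^ (-(1 / 2) : ℝ) * exp (-(s.re * t))) := by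
        refine norm_integral_le_of_norm_le (hrpow.const_mul _)
          ((ae_restrict_iff' measurableSet_Ioi).2 (.of_forall fun t (ht : 0 < t) => ?_))
        have hre : (s * t).re = s.re * t := by simp
        have hbound := norm_dampedKernel_sub_le (z := s * t) (by rw [hre]; positivity)
        have hfactor : F t * dampedKernel (s * t) - √π / 2 * s ^ (1 / 2 : ℂ) *
            (F t * ((t ^ (3 / 2 - 1 : ℝ) : ℝ) * Complex.exp (-(s * t)))) =
            F t * (dampedKernel (s * t) -
              √π / 2 * ((s * t) ^ (1 / 2 : ℂ) * Complex.exp (-(s * t)))) := by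
          rw [mul_comm s t, ofReal_mul_cpow ht (Complex.ne_zero_of_re_pos hs),
            Complex.ofReal_cpow ht.le]
          norm_num
          ring
        rw [hfactor, norm_mul, Complex.norm_real]
        calc _ ≤ C * (3 / 4 * (√π * ((s * t).re ^ (-(1 / 2) : ℝ) * exp (-(s * t).re)))) := by
              gcongr
              exacts [(abs_nonneg _).trans (hFC t), hFC t]
          _ = _ := by rw [hre]; ring
    _ = C * (3 / 4 * √π) * (√π / s.re) := by
        rw [integral_const_mul, integral_rpow_neg_half_mul_exp_scaled hs]
    _ = _ := by linear_combination C * (3 / 4) / s.re * mul_self_sqrt pi_pos.le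

end AbelTransform

section RootSum

variable {C t v x T : ℝ} {s : ℂ}

/-- The sum over lattice points `p` of the length `2 √(x - |p|⁴)` of the interval of all real `w`
with `|p|⁴ + w² < x`. Only finitely many terms are nonzero, as `√` vanishes on negative numbers. -/
noncomputable def rootSum (x : ℝ) : ℝ := ∑' p, 2 * √(x - latticeNorm p ^ 4)

theorem le_latticeNorm_pow_four_of_notMem {p : ℤ × ℤ} (hT : 0 ≤ T) (hx : x ≤ T ^ 4)
    (hp : p ∉ latticeBox T) : x ≤ latticeNorm p ^ 4 :=
  hx.trans (pow_le_pow_left₀ hT (not_le.1 fun h => hp (mem_latticeBox h)).le 4)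

theorem two_mul_sqrt_sub_eq_zero {p : ℤ × ℤ} (hT : 0 ≤ T) (hx : x ≤ T ^ 4)
    (hp : p ∉ latticeBox T) : 2 * √(x - latticeNorm p ^ 4) = 0 := by
  rw [sqrt_eq_zero_of_nonpos (sub_nonpos.2 (le_latticeNorm_pow_four_of_notMem hT hx hp)), mul_zero]

theorem rootSum_eq_sum (hT : 0 ≤ T) (hx : x ≤ T ^ 4) :
    rootSum x = ∑ p ∈ latticeBox T, 2 * √(x - latticeNorm p ^ 4) :=
  tsum_eq_sum fun _ hp => two_mul_sqrt_sub_eq_zero hT hx hp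

theorem monotone_rootSum : Monotone rootSum := by
  intro x y hxy
  have hT : y ≤ max y 1 ^ 4 :=
    (le_max_left _ _).trans (le_self_pow₀ (le_max_right _ _) four_ne_zero)
  have hT₀ : (0 : ℝ) ≤ max y 1 := by positivity
  rw [rootSum_eq_sum hT₀ (hxy.trans hT), rootSum_eq_sum hT₀ hT]
  gcongr

theorem rootSum_of_le_one (hx : x ≤ 1) : rootSum x = 2 * √x := by
  rw [rootSum, tsum_eq_single 0 fun p hp => ?_]
  · simp [latticeNorm]
  · have := one_le_pow₀ (one_le_latticeNorm hp) (n := 4)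
    rw [sqrt_eq_zero_of_nonpos (by linarith), mul_zero]

/-- The error of the approximation `rootSum x ≈ (π² / 2) x`, normalised by `√x`, at `x = t⁴`. -/
noncomputable def rootDiscrepancy (t : ℝ) : ℝ := (rootSum (t ^ 4) - π ^ 2 / 2 * t ^ 4) / t ^ 2

theorem measurable_rootDiscrepancy : Measurable rootDiscrepancy := by
  have := monotone_rootSum.measurable
  unfold rootDiscrepancy
  fun_prop

theorem integrableOn_sqrt_mul_abelKernel (hv : 0 < v) (r : ℝ) :
    IntegrableOn (fun t => √(t ^ 4 - r ^ 4) * (t ^ 3 * abelKernel v t)) (Ioi 0) := by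
  have hk := measurable_abelKernel
  refine ((integrableOn_pow_three_mul_abelKernel hv.ne').const_mul (v ^ 2)).mono' (by fun_prop)
    ((ae_restrict_iff' measurableSet_Ioi).2 (.of_forall fun t (ht : 0 < t) => ?_))
  have hk₀ := abelKernel_nonneg v t
  rw [norm_of_nonneg (by positivity)]
  rcases le_or_gt v t with h | h
  · simp [abelKernel_eq_zero hv.le h]
  · gcongr
    refine sqrt_le_iff.2 ⟨by positivity, ?_⟩
    calc t ^ 4 - r ^ 4 ≤ t ^ 4 := sub_le_self _ (by positivity)
      _ ≤ v ^ 4 := by gcongr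
      _ = (v ^ 2) ^ 2 := by ring

theorem rootDiscrepancy_mul_abelKernel (hv : 0 ≤ v) (ht : 0 < t) :
    rootDiscrepancy t * (t ^ 5 * abelKernel v t) =
      ∑ p ∈ latticeBox v, 2 * (√(t ^ 4 - latticeNorm p ^ 4) * (t ^ 3 * abelKernel v t)) -
        π ^ 2 / 2 * (t ^ 7 * abelKernel v t) := by
  rcases le_or_gt v t with h | h
  · simp [abelKernel_eq_zero hv h]
  · simp_rw [← mul_assoc (2 : ℝ), ← Finset.sum_mul]
    rw [rootDiscrepancy, rootSum_eq_sum hv (by gcongr)]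
    field_simp

theorem abelTransform_rootDiscrepancy (hv : 0 < v) :
    abelTransform rootDiscrepancy v =
      π / 4 * (∑' p, max (v ^ 4 - latticeNorm p ^ 4) 0 - 2 * π / 3 * v ^ 6) := by
  have hsqrt (p : ℤ × ℤ) := (integrableOn_sqrt_mul_abelKernel hv (latticeNorm p)).const_mul 2
  have hseven : IntegrableOn (fun t => t ^ 7 * abelKernel v t) (Ioi 0) :=
    .of_integral_ne_zero (by rw [integral_pow_seven_mul_abelKernel hv.le]; positivity)
  rw [abelTransform,
    setIntegral_congr_fun measurableSet_Ioi fun t ht => rootDiscrepancy_mul_abelKernel hv.le ht,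
    integral_sub (integrable_finsetSum _ fun p _ => hsqrt p) (hseven.const_mul _),
    integral_finsetSum _ fun p _ => hsqrt p, integral_const_mul,
    integral_pow_seven_mul_abelKernel hv.le]
  simp_rw [integral_const_mul, integral_sqrt_mul_abelKernel (latticeNorm_nonneg _)]
  rw [← Finset.mul_sum, ← Finset.mul_sum, tsum_eq_sum fun p hp => max_eq_right <| sub_nonpos.2 <|
    le_latticeNorm_pow_four_of_notMem hv.le le_rfl hp]
  ring

theorem integral_tsum_max_mul_dampedWeight (hs : 0 < s.re) :
    ∫ v : ℝ in Ioi 0, ((∑' p, max (v ^ 4 - latticeNorm p ^ 4) 0 : ℝ) : ℂ) * dampedWeight s v =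
      4 / s * ∑' p, Complex.exp (-(s * latticeNorm p)) := by
  have hsum := hasSum_integral_of_summable_integral_norm
    (fun p => integrableOn_max_mul_dampedWeight hs (latticeNorm p)) <|
    .of_nonneg_of_le (fun p => integral_nonneg fun _ => norm_nonneg _)
      (fun p => integral_norm_max_mul_dampedWeight_le hs (latticeNorm_nonneg p))
      (((summable_exp_neg_mul_latticeNorm hs).mul_left _).mul_left _)
  simp_rw [integral_max_mul_dampedWeight hs (latticeNorm_nonneg _), tsum_mul_right] at hsum
  simp_rw [Complex.ofReal_tsum, ← hsum.tsum_eq, tsum_mul_left]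

theorem integral_rootDiscrepancy_mul_dampedKernel (hC : ∀ t, |rootDiscrepancy t| ≤ C)
    (hs : 0 < s.re) :
    ∫ t : ℝ in Ioi 0, rootDiscrepancy t * dampedKernel (s * t) =
      π / s * (∑' p, Complex.exp (-(s * latticeNorm p)) - 2 * π / s ^ 2) := by
  have hF := measurable_rootDiscrepancy
  have hA := integrableOn_abelTransform_mul_dampedWeight hF hC hs
  have hsix := integrableOn_pow_six_mul_dampedWeight hs
  have hsplit : ∫ v : ℝ in Ioi 0,
      ((∑' p, max (v ^ 4 - latticeNorm p ^ 4) 0 : ℝ) : ℂ) * dampedWeight s v =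
      ∫ v : ℝ in Ioi 0, 4 / π * (abelTransform rootDiscrepancy v * dampedWeight s v) +
        2 * π / 3 * (v ^ 6 * dampedWeight s v) := by
    refine setIntegral_congr_fun measurableSet_Ioi fun v hv => ?_
    have : (π : ℂ) ≠ 0 := Complex.ofReal_ne_zero.2 pi_ne_zero
    rw [abelTransform_rootDiscrepancy hv]
    push_cast
    field_simp
    ring
  rw [integral_tsum_max_mul_dampedWeight hs, integral_add (hA.const_mul _) (hsix.const_mul _),
    integral_const_mul, integral_const_mul, integral_pow_six_mul_dampedWeight hs,
    ← integral_mul_dampedKernel hF hC hs] at hsplit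
  have := Complex.ne_zero_of_re_pos hs
  have : (π : ℂ) ≠ 0 := Complex.ofReal_ne_zero.2 pi_ne_zero
  field_simp at hsplit ⊢
  linear_combination -hsplit / 12

end RootSum

section Spectrum

variable {C μ : ℝ}

theorem tendsto_ofReal_add_mul_I (μ : ℝ) :
    Tendsto (fun σ : ℝ => (σ + μ * Complex.I : ℂ)) (𝓝[>] 0) (𝓝 (μ * Complex.I)) := by
  have : Continuous fun σ : ℝ => (σ + μ * Complex.I : ℂ) := by fun_prop
  simpa using (this.tendsto 0).mono_left nhdsWithin_le_nhds

theorem tendsto_cpow_ofReal_add_mul_I (hμ : μ ≠ 0) (w : ℂ) :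
    Tendsto (fun σ : ℝ => (σ + μ * Complex.I : ℂ) ^ w) (𝓝[>] 0) (𝓝 ((μ * Complex.I) ^ w)) :=
  (tendsto_ofReal_add_mul_I μ).cpow tendsto_const_nhds (.inr (by simp [hμ]))

theorem tendsto_rpow_nhdsGT_zero {a : ℝ} (ha : 0 < a) :
    Tendsto (fun σ : ℝ => σ ^ a) (𝓝[>] 0) (𝓝 0) := by
  simpa [zero_rpow ha.ne'] using
    ((continuousAt_rpow_const 0 a (.inr ha.le)).tendsto.mono_left nhdsWithin_le_nhds)

theorem tendsto_rpow_mul_integral_rootDiscrepancy_mul_dampedKernel_sub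
    (hC : ∀ t, |rootDiscrepancy t| ≤ C) (μ : ℝ) :
    Tendsto (fun σ : ℝ => ((σ ^ (3 / 2 : ℝ) : ℝ) : ℂ) *
        ((∫ t : ℝ in Ioi 0, rootDiscrepancy t * dampedKernel ((σ + μ * Complex.I) * t)) -
          √π / 2 * (σ + μ * Complex.I) ^ (1 / 2 : ℂ) * ∫ t : ℝ in Ioi 0, rootDiscrepancy t *
            ((t ^ (3 / 2 - 1 : ℝ) : ℝ) * Complex.exp (-((σ + μ * Complex.I) * t)))))
      (𝓝[>] 0) (𝓝 0) := by
  have hσ := (tendsto_rpow_nhdsGT_zero (a := 1 / 2) (by norm_num)).mul_const (3 / 4 * π * C)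
  rw [zero_mul] at hσ
  refine squeeze_zero_norm' ?_ hσ
  filter_upwards [self_mem_nhdsWithin] with σ (hσ : 0 < σ)
  have h := norm_integral_mul_dampedKernel_sub_le measurable_rootDiscrepancy hC
    (s := σ + μ * Complex.I) (by simpa)
  calc _ ≤ σ ^ (3 / 2 : ℝ) * (3 / 4 * π * C / σ) := by
        rw [norm_mul, Complex.norm_real, norm_of_nonneg (by positivity)]
        gcongr
        simpa using h
    _ = σ ^ (1 / 2 : ℝ) * (3 / 4 * π * C) := by
        rw [show (3 / 2 : ℝ) = 1 / 2 + 1 by norm_num, rpow_add_one hσ.ne']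
        field_simp

theorem two_cpow_neg_three_halves : (2 : ℂ) ^ (-(3 / 2 : ℝ) : ℂ) = √2 / 4 := by
  have h : (2 : ℝ) ^ (-(3 / 2) : ℝ) = √2 / 4 := by
    rw [show -(3 / 2 : ℝ) = 1 / 2 - (2 : ℕ) by norm_num, rpow_sub_natCast two_ne_zero,
      ← sqrt_eq_rpow]
    norm_num
  rw [← Complex.ofReal_neg, ← Complex.ofReal_ofNat, ← Complex.ofReal_cpow zero_le_two, h]
  push_cast
  rfl

theorem tendsto_rpow_mul_integral_rootDiscrepancy_mul_dampedKernel
    (hC : ∀ t, |rootDiscrepancy t| ≤ C) (hμ : μ ≠ 0) :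
    Tendsto (fun σ : ℝ => ((σ ^ (3 / 2 : ℝ) : ℝ) : ℂ) *
        ∫ t : ℝ in Ioi 0, rootDiscrepancy t * dampedKernel ((σ + μ * Complex.I) * t)) (𝓝[>] 0)
      (𝓝 (π * (μ * Complex.I)⁻¹ * (2 * π * (μ * Complex.I) ^ (-1 / 2 : ℂ) *
        ((shell μ).ncard * 2 ^ (-(3 / 2 : ℝ) : ℂ))))) := by
  have hne : μ * Complex.I ≠ 0 := by simpa
  have hs := tendsto_ofReal_add_mul_I μ
  have hσ := (tendsto_rpow_nhdsGT_zero (a := 3 / 2) (by norm_num)).ofReal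
  have h := ((hs.inv₀ hne).const_mul (π : ℂ)).mul <|
    (((tendsto_cpow_ofReal_add_mul_I hμ (-1 / 2)).const_mul (2 * π : ℂ)).mul
      (tendsto_rpow_mul_tsum_hardyDenom (b := 3 / 2) (by norm_num) hμ)).sub
      (hσ.mul (((hs.pow 2).inv₀ (pow_ne_zero 2 hne)).const_mul (2 * π : ℂ)))
  rw [Complex.ofReal_zero, zero_mul, sub_zero] at h
  refine h.congr' ?_
  filter_upwards [self_mem_nhdsWithin] with σ (hσ : 0 < σ)
  have hre : 0 < (σ + μ * Complex.I : ℂ).re := by simpa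
  rw [integral_rootDiscrepancy_mul_dampedKernel hC hre, tsum_cexp_neg_mul_latticeNorm hre]
  ring

theorem hardyLimit_div_eq {z : ℂ} (hz : z ≠ 0) (n : ℂ) :
    π * z⁻¹ * (2 * π * z ^ (-1 / 2 : ℂ) * (n * 2 ^ (-(3 / 2 : ℝ) : ℂ))) /
      (√π / 2 * z ^ (1 / 2 : ℂ)) = √2 * π * √π * n / z ^ 2 := by
  have hpi : (√π : ℂ) ≠ 0 := Complex.ofReal_ne_zero.2 (sqrt_ne_zero'.2 pi_pos)
  have hsq : (√π : ℂ) ^ 2 = π := by exact_mod_cast sq_sqrt pi_pos.le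
  have hroot : (z ^ (1 / 2 : ℂ)) ^ 2 = z := by simp
  calc _ = √2 * π * ((√π) ^ 2 / √π) * n / z * (((z ^ (1 / 2 : ℂ)) ^ 2)⁻¹) := by
        rw [two_cpow_neg_three_halves, neg_div, Complex.cpow_neg, hsq]
        field_simp
        ring
    _ = _ := by
        rw [hroot]
        field_simp

theorem tendsto_rpow_mul_integral_rootDiscrepancy_mul_cexp
    (hC : ∀ t, |rootDiscrepancy t| ≤ C) (hμ : μ ≠ 0) :
    Tendsto (fun σ : ℝ => ((σ ^ (3 / 2 : ℝ) : ℝ) : ℂ) * ∫ t : ℝ in Ioi 0, rootDiscrepancy t *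
        ((t ^ (3 / 2 - 1 : ℝ) : ℝ) * Complex.exp (-((σ + μ * Complex.I) * t)))) (𝓝[>] 0)
      (𝓝 ((-(√2 * π * √π * (shell μ).ncard / μ ^ 2) : ℝ) : ℂ)) := by
  have hne : μ * Complex.I ≠ 0 := by simpa
  have hpi : (√π : ℂ) ≠ 0 := Complex.ofReal_ne_zero.2 (sqrt_ne_zero'.2 pi_pos)
  have hfactor {z : ℂ} (hz : z ≠ 0) : √π / 2 * z ^ (1 / 2 : ℂ) ≠ 0 :=
    mul_ne_zero (div_ne_zero hpi two_ne_zero) ((Complex.cpow_ne_zero_iff_of_exponent_ne_zero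
      (by norm_num)).2 hz)
  have hlim := ((tendsto_rpow_mul_integral_rootDiscrepancy_mul_dampedKernel hC hμ).sub
    (tendsto_rpow_mul_integral_rootDiscrepancy_mul_dampedKernel_sub hC μ)).div
    ((tendsto_cpow_ofReal_add_mul_I hμ (1 / 2)).const_mul (√π / 2 : ℂ)) (hfactor hne)
  have hval : √2 * π * √π * (shell μ).ncard / (μ * Complex.I) ^ 2 =
      ((-(√2 * π * √π * (shell μ).ncard / μ ^ 2) : ℝ) : ℂ) := by
    rw [mul_pow, Complex.I_sq, mul_neg_one, div_neg]
    push_cast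
    rfl
  rw [sub_zero, hardyLimit_div_eq hne, hval] at hlim
  refine hlim.congr' ?_
  filter_upwards [self_mem_nhdsWithin] with σ (hσ : 0 < σ)
  have hs : (σ + μ * Complex.I : ℂ) ≠ 0 := Complex.ne_zero_of_re_pos (by simpa)
  rw [Pi.div_apply, ← mul_sub, sub_sub_cancel, mul_left_comm, mul_div_cancel_left₀ _ (hfactor hs)]

theorem tendsto_integral_rootDiscrepancy_mul_cos
    (hC : ∀ t, |rootDiscrepancy t| ≤ C) (hμ : μ ≠ 0) :
    Tendsto (fun σ => ∫ t, rootDiscrepancy t * cos (μ * t)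
        ∂ProbabilityTheory.gammaMeasure (3 / 2) σ) (𝓝[>] 0)
      (𝓝 (-(2 * √2 * π * (shell μ).ncard / μ ^ 2))) := by
  have h := ((Complex.continuous_re.tendsto _).comp
    (tendsto_rpow_mul_integral_rootDiscrepancy_mul_cexp hC hμ)).div_const (√π / 2)
  have hval : ((-(√2 * π * √π * (shell μ).ncard / μ ^ 2) : ℝ) : ℂ).re / (√π / 2) =
      -(2 * √2 * π * (shell μ).ncard / μ ^ 2) := by
    rw [Complex.ofReal_re]
    field_simp
  rw [hval] at h
  refine h.congr' ?_
  filter_upwards [self_mem_nhdsWithin] with σ (hσ : 0 < σ)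
  rw [integral_mul_cos_gammaMeasure (by norm_num) hσ ⟨measurable_rootDiscrepancy, C, hC⟩,
    Gamma_three_halves, Function.comp_apply, Complex.re_ofReal_mul, div_mul_eq_mul_div]

end Spectrum

section Counting

variable {C t T x y : ℝ}

theorem sq_lt_iff_mem_Ioo_ceil_sqrt {w : ℤ} : (w : ℝ) ^ 2 < y ↔ w ∈ Finset.Ioo (-⌈√y⌉) ⌈√y⌉ := by
  rw [Finset.mem_Ioo, neg_lt, Int.lt_ceil, Int.lt_ceil, ← sq_abs, ← lt_sqrt (abs_nonneg _), abs_lt,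
    Int.cast_neg, neg_lt]

theorem abs_card_Ioo_ceil_sub_le (hx : 0 ≤ x) :
    |((Finset.Ioo (-⌈x⌉) ⌈x⌉).card : ℝ) - 2 * x| ≤ 1 := by
  obtain rfl | hx := hx.eq_or_lt
  · simp
  have hceil : 1 ≤ ⌈x⌉ := Int.one_le_ceil_iff.2 hx
  have hcard : ((Finset.Ioo (-⌈x⌉) ⌈x⌉).card : ℤ) = 2 * ⌈x⌉ - 1 := by
    rw [Int.card_Ioo]; lia
  have hcard' : ((Finset.Ioo (-⌈x⌉) ⌈x⌉).card : ℝ) = 2 * ⌈x⌉ - 1 := by exact_mod_cast hcard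
  rw [hcard', abs_le]
  constructor <;> linarith [Int.ceil_lt_add_one x, Int.le_ceil x]

theorem S_eq_sum_card (hT : 0 ≤ T) (hx : x ≤ T ^ 4) :
    S x = ∑ p ∈ latticeBox T,
      (Finset.Ioo (-⌈√(x - latticeNorm p ^ 4)⌉) ⌈√(x - latticeNorm p ^ 4)⌉).card := by
  rw [← Finset.card_sigma, ← Set.ncard_coe_finset, S, ← Set.ncard_image_of_injective _
    ((Equiv.prodAssoc ℤ ℤ ℤ).injective.comp (Equiv.sigmaEquivProd (ℤ × ℤ) ℤ).injective)]
  congr 1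
  ext ⟨a, b, w⟩
  have hnorm : latticeNorm (a, b) ^ 4 = ((a : ℝ) ^ 2 + (b : ℝ) ^ 2) ^ 2 := by
    rw [← latticeNorm_sq (a, b)]; ring
  have hbox (h : ((a : ℝ) ^ 2 + (b : ℝ) ^ 2) ^ 2 + (w : ℝ) ^ 2 < x) : (a, b) ∈ latticeBox T :=
    mem_latticeBox <| le_of_pow_le_pow_left₀ four_ne_zero hT <| by
      rw [hnorm]; linarith [sq_nonneg (w : ℝ)]
  simp only [Set.mem_ofPred_eq, Set.mem_image, Finset.mem_coe, Finset.mem_sigma,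
    ← sq_lt_iff_mem_Ioo_ceil_sqrt, lt_sub_iff_add_lt']
  constructor
  · exact fun h => ⟨⟨(a, b), w⟩, ⟨hbox h, hnorm ▸ h⟩, rfl⟩
  · rintro ⟨⟨⟨a, b⟩, w⟩, ⟨-, h⟩, ⟨⟩⟩
    exact hnorm ▸ h

theorem abs_S_sub_rootSum_le (hT : 1 ≤ T) (hx : x ≤ T ^ 4) :
    |(S x : ℝ) - rootSum x| ≤ 25 * T ^ 2 := by
  have hT₀ : 0 ≤ T := by linarith
  rw [S_eq_sum_card hT₀ hx, rootSum_eq_sum hT₀ hx, Nat.cast_sum, ← Finset.sum_sub_distrib]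
  calc _ ≤ ∑ _ ∈ latticeBox T, (1 : ℝ) := (Finset.abs_sum_le_sum_abs _ _).trans
        (Finset.sum_le_sum fun _ _ => abs_card_Ioo_ceil_sub_le (sqrt_nonneg _))
    _ ≤ _ := by simpa using card_latticeBox_le hT

theorem rootDiscrepancy_abs (t : ℝ) : rootDiscrepancy |t| = rootDiscrepancy t := by
  rw [rootDiscrepancy, sq_abs, show |t| ^ 4 = t ^ 4 from Even.pow_abs (by decide) t,
    rootDiscrepancy]

theorem abs_rootDiscrepancy_le_of_abs_le_one (ht : |t| ≤ 1) : |rootDiscrepancy t| ≤ 8 := by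
  obtain rfl | h₀ := eq_or_ne t 0
  · simp [rootDiscrepancy]
  have ht₂ : t ^ 2 ≤ 1 := (sq_le_one_iff_abs_le_one t).2 ht
  have ht₄ : √(t ^ 4) = t ^ 2 := by rw [show t ^ 4 = (t ^ 2) ^ 2 by ring, sqrt_sq (sq_nonneg t)]
  have hval : rootDiscrepancy t = 2 - π ^ 2 / 2 * t ^ 2 := by
    rw [rootDiscrepancy, rootSum_of_le_one (by nlinarith [sq_nonneg t]), ht₄]
    field_simp
  have hpi : π ^ 2 ≤ 4 ^ 2 := by gcongr; exact pi_le_four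
  rw [hval, abs_le]
  constructor <;> nlinarith [sq_nonneg t, sq_nonneg π]

theorem abs_rootDiscrepancy_le (hC₀ : 0 ≤ C)
    (hC : ∀ x : ℝ, 1 ≤ x → |E x| ≤ C * x ^ ((1 : ℝ) / 2)) (t : ℝ) :
    |rootDiscrepancy t| ≤ C + 25 := by
  obtain ht | ht := le_total |t| 1
  · linarith [abs_rootDiscrepancy_le_of_abs_le_one ht]
  rw [← rootDiscrepancy_abs]
  set u := |t|
  have hE := hC (u ^ 4) (one_le_pow₀ ht)
  rw [← sqrt_eq_rpow, show u ^ 4 = (u ^ 2) ^ 2 by ring, sqrt_sq (sq_nonneg u), ← pow_mul] at hE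
  have hS := abs_S_sub_rootSum_le ht le_rfl
  rw [rootDiscrepancy, abs_div, abs_of_nonneg (sq_nonneg u), div_le_iff₀ (by positivity)]
  calc |rootSum (u ^ 4) - π ^ 2 / 2 * u ^ 4| = |E (u ^ 4) - (S (u ^ 4) - rootSum (u ^ 4))| := by
        rw [E]; ring_nf
    _ ≤ |E (u ^ 4)| + |(S (u ^ 4) : ℝ) - rootSum (u ^ 4)| := abs_sub _ _
    _ ≤ _ := by linarith

theorem not_summable_inv_latticeNorm_sq : ¬ Summable fun p => (latticeNorm p ^ 2)⁻¹ := by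
  intro h
  have hinj : Function.Injective fun q : Σ n : ℕ, Fin (n + 1) => ((q.1 + 1 : ℤ), (q.2 : ℤ)) := by
    rintro ⟨m, i⟩ ⟨n, j⟩ hq
    simp only [Prod.mk.injEq, add_left_inj, Nat.cast_inj] at hq
    obtain ⟨rfl, hij⟩ := hq
    rw [Fin.ext hij]
  have hterm (n : ℕ) (k : Fin (n + 1)) :
      (2 * ((n : ℝ) + 1) ^ 2)⁻¹ ≤ (latticeNorm ((n + 1 : ℤ), (k : ℤ)) ^ 2)⁻¹ := by
    have hk : (k : ℝ) ≤ n + 1 := by exact_mod_cast k.2.le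
    rw [latticeNorm_sq, two_mul]
    push_cast
    gcongr
  have hrow (n : ℕ) : 2⁻¹ * ((n + 1 : ℕ) : ℝ)⁻¹ ≤
      ∑' k : Fin (n + 1), (latticeNorm ((n + 1 : ℤ), (k : ℤ)) ^ 2)⁻¹ := by
    rw [tsum_fintype]
    refine le_trans (le_of_eq ?_) (Finset.card_nsmul_le_sum _ _ _ fun k _ => hterm n k)
    rw [Finset.card_univ, Fintype.card_fin, nsmul_eq_mul]
    push_cast
    field_simp
  have hharmonic := Summable.of_nonneg_of_le (fun n => by positivity) hrow
    (h.comp_injective hinj).sigma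
  rw [summable_mul_left_iff (by norm_num), summable_nat_add_iff 1 (f := fun n => (n : ℝ)⁻¹)]
    at hharmonic
  exact Real.not_summable_natCast_inv hharmonic

theorem sum_shell_le {μ : ℝ} (hμ : μ ≠ 0) (B : Finset (ℤ × ℤ)) :
    (∑ p ∈ B with |2 * π * latticeNorm p| = |μ|, √2 / π * (latticeNorm p ^ 2)⁻¹) / 2 ≤
      2 * √2 * π * (shell μ).ncard / μ ^ 2 := by
  have hshell {p : ℤ × ℤ} (hp : |2 * π * latticeNorm p| = |μ|) : p ∈ shell μ := by
    have := latticeNorm_nonneg p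
    rwa [abs_of_nonneg (by positivity)] at hp
  have hcard : ({p ∈ B | |2 * π * latticeNorm p| = |μ|}.card : ℝ) ≤ (shell μ).ncard := by
    rw [← Set.ncard_coe_finset]
    exact_mod_cast Set.ncard_le_ncard (fun p hp => hshell (Finset.mem_filter.1 hp).2)
      (finite_shell μ)
  have hterm (p : ℤ × ℤ) (hp : p ∈ B.filter fun p => |2 * π * latticeNorm p| = |μ|) :
      √2 / π * (latticeNorm p ^ 2)⁻¹ = 4 * √2 * π / μ ^ 2 := by
    have hp : (2 * π * latticeNorm p) ^ 2 = μ ^ 2 := (sq_eq_sq_iff_abs_eq_abs _ _).2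
      (Finset.mem_filter.1 hp).2
    have : latticeNorm p ≠ 0 := fun h => hμ (by simpa [h] using hp.symm)
    rw [← hp]
    field_simp
    norm_num
  rw [Finset.sum_congr rfl hterm, Finset.sum_const, nsmul_eq_mul]
  calc _ = 2 * √2 * π * ({p ∈ B | |2 * π * latticeNorm p| = |μ|}.card : ℝ) / μ ^ 2 := by ring
    _ ≤ _ := by gcongr

theorem sum_inv_latticeNorm_sq_le (hC : ∀ t, |rootDiscrepancy t| ≤ C) (B : Finset (ℤ × ℤ)) :
    ∑ p ∈ B, (latticeNorm p ^ 2)⁻¹ ≤ 2 * √2 * π * C := by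
  have (σ : Ioi (0 : ℝ)) : IsProbabilityMeasure (ProbabilityTheory.gammaMeasure (3 / 2) σ.1) :=
    ProbabilityTheory.isProbabilityMeasure_gammaMeasure (by norm_num) σ.2
  have : (comap ((↑) : Ioi (0 : ℝ) → ℝ) (𝓝[>] 0)).NeBot :=
    comap_coe_neBot_of_le_principal inf_le_right
  have hfrequency (p) (hp : p ∈ B.erase 0) : 2 * π * latticeNorm p ≠ 0 :=
    mul_ne_zero two_pi_pos.ne'
      (one_pos.trans_le (one_le_latticeNorm (Finset.ne_of_mem_erase hp))).ne'
  have h : ∑ p ∈ B.erase 0, √2 / π * (latticeNorm p ^ 2)⁻¹ ≤ 4 * C := by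
    refine sum_le_of_tendsto_integral_mul_cos
      (m := fun σ : Ioi (0 : ℝ) => ProbabilityTheory.gammaMeasure (3 / 2) σ)
      (l := comap ((↑) : Ioi (0 : ℝ) → ℝ) (𝓝[>] 0)) (g := fun t => -rootDiscrepancy t)
      (fun μ hμ => (tendsto_integral_cos_gammaMeasure (by norm_num) hμ).comp tendsto_comap)
      measurable_rootDiscrepancy.neg (fun t => by simpa using hC t)
      (fun p _ => by positivity) hfrequency (fun μ hμ => ?_) (fun μ hμ => sum_shell_le hμ _)
    simpa [Function.comp_def, integral_neg] using
      ((tendsto_integral_rootDiscrepancy_mul_cos hC hμ).comp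
        (tendsto_comap (f := ((↑) : Ioi (0 : ℝ) → ℝ)))).neg
  -- The term at `p = 0` is `0⁻¹ = 0`.
  rw [Finset.sum_erase _ (by simp [latticeNorm]), ← Finset.mul_sum] at h
  calc _ = √2 * √2 / 2 * ∑ p ∈ B, (latticeNorm p ^ 2)⁻¹ := by simp
    _ = √2 * π / 2 * (√2 / π * ∑ p ∈ B, (latticeNorm p ^ 2)⁻¹) := by field_simp
    _ ≤ √2 * π / 2 * (4 * C) := by gcongr
    _ = 2 * √2 * π * C := by ring

end Counting

/-- There is no constant `C > 0` such that `|E(x)| ≤ C·x^{1/2}` for all `x ≥ 1`;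
the exponent `1/2` in the bound `|E(x)| ≪ x^{1/2} log x` is thus best possible. -/
theorem no_sqrt_bound :
    ¬ ∃ C : ℝ, 0 < C ∧ ∀ x : ℝ, 1 ≤ x → |E x| ≤ C * x ^ ((1 : ℝ) / 2) := by
  rintro ⟨C, hC₀, hC⟩
  have hF := abs_rootDiscrepancy_le hC₀.le hC
  exact not_summable_inv_latticeNorm_sq <|
    summable_of_sum_le (fun p => by positivity) (sum_inv_latticeNorm_sq_le hF)
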